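/- For every n ≥ 1, θ(K_{1,n,n}) = θ(K_{2,n,n}) whenever n ≡ 0 (mod 4), and both equal n/4 + 1. -/

import Mathlib

open SimpleGraph

/-- A simple graph is planar if it admits a drawing in the plane: an injective
placement of vertices and, for each edge, an injective continuous arc joining
the images of its endpoints, such that arcs avoid vertex images in their
interiors and distinct arcs meet only at vertex images. -/
def IsPlanar {V : Type*} (G : SimpleGraph V) : Prop :=
  ∃ (f : V → ℝ × ℝ) (γ : G.edgeSet → (Set.Icc (0:ℝ) 1 → ℝ × ℝ)),
    Function.Injective f ∧
    (∀ e : G.edgeSet, Continuous (γ e)) ∧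
    (∀ e : G.edgeSet, ∃ u v : V, (e : Sym2 V) = s(u, v) ∧
      γ e ⟨0, by norm_num⟩ = f u ∧ γ e ⟨1, by norm_num⟩ = f v) ∧
    (∀ e : G.edgeSet, Function.Injective (γ e)) ∧
    (∀ e : G.edgeSet, ∀ t : Set.Icc (0:ℝ) 1, (t : ℝ) ≠ 0 → (t : ℝ) ≠ 1 →
      ∀ v : V, γ e t ≠ f v) ∧
    (∀ e e' : G.edgeSet, e ≠ e' → ∀ s t : Set.Icc (0:ℝ) 1,
      γ e s = γ e' t → γ e s ∈ Set.range f)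

/-- The thickness of a graph: the least `n` such that `G` is the union of `n`
planar subgraphs. -/
noncomputable def thickness {V : Type*} (G : SimpleGraph V) : ℕ :=
  sInf {n : ℕ | ∃ H : Fin n → SimpleGraph V,
    (∀ i, H i ≤ G) ∧ (∀ i, IsPlanar (H i)) ∧ (⨆ i, H i) = G}


set_option linter.unusedVariables false

lemma ptA_arc (a b x s : ℝ) (hs : s = 1 ∨ s = -1) (hab : a < b) (hx : a ≤ x) (hx' : x ≤ b)
    (h0 : s * ((x - a) * (b - x)) = 0) : x = a ∨ x = b := by
  have : (x - a) * (b - x) = 0 := by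
    rcases hs with h | h <;> rw [h] at h0 <;> linarith
  rcases mul_eq_zero.mp this with h | h
  · left; linarith
  · right; linarith

lemma arcs_meet (a b c d x : ℝ) (s t : ℝ) (hs : s = 1 ∨ s = -1) (ht : t = 1 ∨ t = -1)
    (hab : a < b) (hcd : c < d)
    (hne : ¬ (a = c ∧ b = d))
    (h1 : s = t → a < c → c < b → b < d → False)
    (h2 : s = t → c < a → a < d → d < b → False)
    (hxa : a ≤ x) (hxb : x ≤ b) (hxc : c ≤ x) (hxd : x ≤ d)
    (he : s * ((x - a) * (b - x)) = t * ((x - c) * (d - x))) : x = a ∨ x = b := by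
  by_contra hcon
  push Not at hcon
  have ha : a < x := lt_of_le_of_ne hxa (Ne.symm hcon.1)
  have hb : x < b := lt_of_le_of_ne hxb hcon.2
  have hp : 0 < (x - a) * (b - x) := mul_pos (by linarith) (by linarith)
  have hq : 0 ≤ (x - c) * (d - x) := mul_nonneg (by linarith) (by linarith)
  have hst : s = t := by
    rcases hs with h | h <;> rcases ht with h' | h' <;> rw [h, h'] at he <;>
      first | (rw [h, h']; done) | (exfalso; linarith)
  have he' : (x - a) * (b - x) = (x - c) * (d - x) := by
    rw [hst] at he
    rcases ht with h' | h' <;> rw [h'] at he <;> linarith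
  have hq' : 0 < (x - c) * (d - x) := by linarith
  have hc : c < x := by
    rcases hxc.lt_or_eq with h | h
    · exact h
    · rw [h] at hq'; simp at hq'
  have hd : x < d := by
    rcases hxd.lt_or_eq with h | h
    · exact h
    · rw [← h] at hq'; simp at hq'
  rcases lt_trichotomy a c with h | h | h
  · have : d ≤ b := by
      by_contra hh
      exact h1 hst h (by linarith) (by linarith)
    nlinarith
  · have hbd : b ≠ d := fun hh => hne ⟨h, hh⟩
    subst h
    have := mul_left_cancel₀ (by linarith : x - a ≠ 0) he'
    exact hbd (by linarith)
  · have : b ≤ d := by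
      by_contra hh
      exact h2 hst h (by linarith) (by linarith)
    nlinarith

lemma book_planar {V : Type*} (G : SimpleGraph V) (pos : V → ℕ) (hpos : Function.Injective pos)
    (up : V → V → Prop)
    (hc : ∀ a b c d, G.Adj a b → G.Adj c d → pos a < pos c → pos c < pos b → pos b < pos d →
      (up a b ↔ up c d) → False) : IsPlanar G := by
  classical
  have key : ∀ e : G.edgeSet, ∃ u v : V, (e : Sym2 V) = s(u, v) ∧ pos u < pos v := by
    rintro ⟨e, he⟩
    induction e with | _ x y
    have hxy : G.Adj x y := he
    rcases lt_trichotomy (pos x) (pos y) with h | h | h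
    · exact ⟨x, y, rfl, h⟩
    · exact absurd (hpos h) hxy.ne
    · exact ⟨y, x, Sym2.eq_swap, h⟩
  choose l r hlr hlt using key
  have hadj : ∀ e, G.Adj (l e) (r e) := fun e => by
    have := e.2
    rw [hlr e] at this
    exact this
  let sg : G.edgeSet → ℝ := fun e => if up (l e) (r e) then 1 else -1
  have hsg : ∀ e, sg e = 1 ∨ sg e = -1 := fun e => by
    by_cases h : up (l e) (r e)
    · left; simp [sg, h]
    · right; simp [sg, h]
  have hsg' : ∀ e e', sg e = sg e' → (up (l e) (r e) ↔ up (l e') (r e')) := fun e e' h => by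
    by_cases h1 : up (l e) (r e) <;> by_cases h2 : up (l e') (r e') <;> simp [sg, h1, h2] at h ⊢ <;>
      norm_num at h
  let X : G.edgeSet → ℝ → ℝ := fun e t => pos (l e) + t * ((pos (r e) : ℝ) - pos (l e))
  have hlt' : ∀ e, (pos (l e) : ℝ) < pos (r e) := fun e => by exact_mod_cast hlt e
  have hX0 : ∀ e (t : Set.Icc (0:ℝ) 1), (pos (l e) : ℝ) ≤ X e t := fun e t => by
    have := t.2.1
    have := hlt' e
    simp only [X]
    nlinarith
  have hX1 : ∀ e (t : Set.Icc (0:ℝ) 1), X e t ≤ pos (r e) := fun e t => by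
    have := t.2.2
    have := hlt' e
    simp only [X]
    nlinarith
  refine ⟨fun v => (pos v, 0), fun e t => (X e t, sg e * ((X e t - pos (l e)) * (pos (r e) - X e t))),
    ?_, ?_, ?_, ?_, ?_, ?_⟩
  · intro u v h
    simp at h
    exact hpos h
  · intro e
    simp only [X]
    fun_prop
  · intro e
    exact ⟨l e, r e, hlr e, by simp [X], by simp [X]⟩
  · intro e s t h
    have h1 : X e s = X e t := (Prod.ext_iff.mp h).1
    have := hlt' e
    simp only [X] at h1
    apply Subtype.ext
    have h2 : ((s : ℝ) - t) * ((pos (r e) : ℝ) - pos (l e)) = 0 := by linarith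
    rcases mul_eq_zero.mp h2 with h | h <;> linarith
  · intro e t h0 h1 v h
    have hy := (Prod.ext_iff.mp h).2
    have := hlt' e
    simp only at hy
    rcases ptA_arc _ _ _ _ (hsg e) (hlt' e) (hX0 e t) (hX1 e t) hy with h | h
    · simp only [X] at h
      have h2 : (t : ℝ) * ((pos (r e) : ℝ) - pos (l e)) = 0 := by linarith
      rcases mul_eq_zero.mp h2 with h | h
      · exact h0 h
      · linarith
    · simp only [X] at h
      have h2 : ((t : ℝ) - 1) * ((pos (r e) : ℝ) - pos (l e)) = 0 := by linarith
      rcases mul_eq_zero.mp h2 with h | h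
      · exact h1 (by linarith)
      · linarith
  · intro e e' hne s t h
    have hx : X e s = X e' t := (Prod.ext_iff.mp h).1
    have hy := (Prod.ext_iff.mp h).2
    simp only at hy
    rw [← hx] at hy
    have hnn : ¬ ((pos (l e) : ℝ) = pos (l e') ∧ (pos (r e) : ℝ) = pos (r e')) := by
      rintro ⟨h1, h2⟩
      have h1 := hpos (Nat.cast_injective h1)
      have h2 := hpos (Nat.cast_injective h2)
      apply hne
      apply Subtype.ext
      rw [hlr e, hlr e', h1, h2]
    have := arcs_meet _ _ _ _ (X e s) (sg e) (sg e') (hsg e) (hsg e') (hlt' e) (hlt' e') hnn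
      (fun hs h1 h2 h3 => hc _ _ _ _ (hadj e) (hadj e') (by exact_mod_cast h1) (by exact_mod_cast h2)
        (by exact_mod_cast h3) (hsg' e e' hs))
      (fun hs h1 h2 h3 => hc _ _ _ _ (hadj e') (hadj e) (by exact_mod_cast h1) (by exact_mod_cast h2)
        (by exact_mod_cast h3) (hsg' e' e hs.symm))
      (hX0 e s) (hX1 e s) (hx ▸ hX0 e' t) (hx ▸ hX1 e' t) hy
    rcases this with h | h
    · exact ⟨l e, by simp [h]⟩
    · exact ⟨r e, by simp [h]⟩

/-- edges of the quarter-plane grid: `(i, j, true)` is horizontal, `(i, j, false)` vertical -/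
abbrev GE := ℕ × ℕ × Bool

def gsrc (e : GE) : ℕ × ℕ := (e.1, e.2.1)
def gtgt (e : GE) : ℕ × ℕ := if e.2.2 then (e.1 + 1, e.2.1) else (e.1, e.2.1 + 1)

noncomputable def gbd : (GE →₀ ZMod 2) →ₗ[ZMod 2] (ℕ × ℕ →₀ ZMod 2) :=
  Finsupp.linearCombination (ZMod 2) (fun e => Finsupp.single (gsrc e) 1 + Finsupp.single (gtgt e) 1)

lemma gbd_single (e : GE) : gbd (Finsupp.single e 1) =
    Finsupp.single (gsrc e) 1 + Finsupp.single (gtgt e) 1 := by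
  simp [gbd]

noncomputable def gsq (s : ℕ × ℕ) : GE →₀ ZMod 2 :=
  Finsupp.single (s.1, s.2, true) 1 + Finsupp.single (s.1, s.2 + 1, true) 1 +
  (Finsupp.single (s.1, s.2, false) 1 + Finsupp.single (s.1 + 1, s.2, false) 1)

lemma ch2 {M : Type*} [AddCommGroup M] [Module (ZMod 2) M] (x : M) : x + x = 0 := by
  rw [← two_smul (ZMod 2) x]
  have : (2 : ZMod 2) = 0 := rfl
  rw [this, zero_smul]

lemma gbd_gsq (s : ℕ × ℕ) : gbd (gsq s) = 0 := by
  simp only [gsq, map_add, gbd_single, gsrc, gtgt]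
  simp only [if_true, Bool.false_eq_true, if_false]
  have h := fun x : ℕ × ℕ => ch2 (Finsupp.single x (1 : ZMod 2))
  generalize ha : Finsupp.single (s.1, s.2) (1 : ZMod 2) = a
  generalize hb : Finsupp.single (s.1 + 1, s.2) (1 : ZMod 2) = b
  generalize hc : Finsupp.single (s.1, s.2 + 1) (1 : ZMod 2) = c
  generalize hd : Finsupp.single (s.1 + 1, s.2 + 1) (1 : ZMod 2) = d
  have h1 := ch2 a
  have h2 := ch2 b
  have h3 := ch2 c
  have h4 := ch2 d
  calc _ = (a + a) + (b + b) + (c + c) + (d + d) := by abel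
    _ = 0 := by rw [h1, h2, h3, h4]; simp

/-- path from the origin to a point -/
noncomputable def gJ (x : ℕ × ℕ) : GE →₀ ZMod 2 :=
  ∑ k ∈ Finset.range x.2, Finsupp.single (0, k, false) 1 +
  ∑ k ∈ Finset.range x.1, Finsupp.single (k, x.2, true) 1

lemma gJ_edge (e : GE) : Finsupp.single e 1 + (gJ (gsrc e) + gJ (gtgt e)) ∈
    Submodule.span (ZMod 2) (Set.range gsq) := by
  obtain ⟨i, j, b⟩ := e
  cases b
  · induction i with
    | zero =>
      simp only [gJ, gsrc, gtgt, Bool.false_eq_true, if_false, Finset.range_zero, Finset.sum_empty,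
        Finset.sum_range_succ, add_zero]
      have h1 := ch2 (Finsupp.single ((0, j, false) : GE) (1 : ZMod 2))
      have h2 := ch2 (∑ k ∈ Finset.range j, Finsupp.single ((0, k, false) : GE) (1 : ZMod 2))
      convert Submodule.zero_mem _
      calc _ = (Finsupp.single ((0, j, false) : GE) (1 : ZMod 2) + Finsupp.single ((0, j, false) : GE) (1 : ZMod 2)) + (∑ k ∈ Finset.range j, Finsupp.single ((0, k, false) : GE) (1 : ZMod 2) + ∑ k ∈ Finset.range j, Finsupp.single ((0, k, false) : GE) (1 : ZMod 2)) := by abel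
        _ = 0 := by rw [h1, h2, add_zero]
    | succ i ih =>
      have hs : gsq (i, j) ∈ Submodule.span (ZMod 2) (Set.range gsq) :=
        Submodule.subset_span ⟨_, rfl⟩
      convert Submodule.add_mem _ ih hs using 1
      simp only [gJ, gsrc, gtgt, Bool.false_eq_true, if_false, Finset.sum_range_succ, gsq]
      have h1 := ch2 (Finsupp.single ((i, j, false) : GE) (1 : ZMod 2))
      generalize Finsupp.single ((i, j, false) : GE) (1 : ZMod 2) = a at *
      rw [← sub_eq_zero]
      have : ∀ x : GE →₀ ZMod 2, a + a = 0 → x = -(a + a) → x = 0 := by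
        intro x h1 h2; rw [h2, h1, neg_zero]
      apply this _ h1
      abel
  · simp only [gJ, gsrc, gtgt, if_true, Finset.sum_range_succ]
    convert Submodule.zero_mem _
    generalize Finsupp.single ((i, j, true) : GE) (1 : ZMod 2) = a
    generalize (∑ k ∈ Finset.range j, Finsupp.single ((0, k, false) : GE) (1 : ZMod 2)) = b
    generalize (∑ k ∈ Finset.range i, Finsupp.single ((k, j, true) : GE) (1 : ZMod 2)) = c
    calc _ = (a + a) + (b + b) + (c + c) := by abel
      _ = 0 := by rw [ch2 a, ch2 b, ch2 c]; simp

lemma gcycle (z : GE →₀ ZMod 2) (hz : gbd z = 0) :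
    z ∈ Submodule.span (ZMod 2) (Set.range gsq) := by
  have : ∀ z : GE →₀ ZMod 2, z + Finsupp.linearCombination (ZMod 2) gJ (gbd z) ∈
      Submodule.span (ZMod 2) (Set.range gsq) := by
    intro z
    induction z using Finsupp.induction_linear with
    | zero => simp
    | add f g hf hg =>
      convert Submodule.add_mem _ hf hg using 1
      simp only [map_add]
      abel
    | single e b =>
      have := Submodule.smul_mem _ b (gJ_edge e)
      convert this using 1
      have h : (Finsupp.single e b : GE →₀ ZMod 2) = b • Finsupp.single e 1 := by simp
      rw [h, map_smul, map_smul, gbd_single]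
      simp
  have := this z
  rwa [hz, map_zero, add_zero] at this

lemma gsq_two (S : Finset (ℕ × ℕ)) (e : GE) :
    (Finset.univ.filter (fun k : S => gsq k e ≠ 0)).card ≤ 2 := by
  classical
  obtain ⟨i, j, b⟩ := e
  have key : ∀ s : ℕ × ℕ, gsq s (i, j, b) ≠ 0 → s = (i, j) ∨
      s = (if b then (i, j - 1) else (i - 1, j)) := by
    rintro ⟨k, l⟩ h
    by_contra hc
    apply h
    cases b <;> simp [gsq, Finsupp.single_apply] at hc ⊢ <;> grind
  rw [← Finset.card_map (Function.Embedding.subtype _)]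
  refine le_trans (Finset.card_le_card (t := {(i, j), (if b then (i, j - 1) else (i - 1, j))}) ?_)
    Finset.card_le_two
  intro s hs
  simp only [Finset.mem_map, Finset.mem_filter, Finset.mem_univ, true_and] at hs
  obtain ⟨k, hk, rfl⟩ := hs
  rcases key _ hk with h | h
  · simp [h]
  · simp [h]

lemma tw_del {ι E : Type*} [Fintype ι] [DecidableEq ι] (c : ι → (E →₀ ZMod 2))
    (h2 : ∀ e, (Finset.univ.filter (fun k => c k e ≠ 0)).card ≤ 2) (e0 : E) :
    ∃ c' : ι → (E →₀ ZMod 2),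
      (∀ e, (Finset.univ.filter (fun k => c' k e ≠ 0)).card ≤ 2) ∧
      (∀ k, c' k ∈ Submodule.span (ZMod 2) (Set.range c)) ∧ (∀ k, c' k e0 = 0) ∧
      ∀ z ∈ Submodule.span (ZMod 2) (Set.range c), z e0 = 0 →
        z ∈ Submodule.span (ZMod 2) (Set.range c') := by
  have z2 : ∀ x : ZMod 2, x ≠ 0 → x = 1 := by decide
  by_cases hi : ∃ i, c i e0 ≠ 0
  swap
  · push Not at hi
    exact ⟨c, h2, fun k => Submodule.subset_span ⟨k, rfl⟩, hi, fun z hz _ => hz⟩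
  obtain ⟨i, hi⟩ := hi
  have hi1 := z2 _ hi
  let φ : (E →₀ ZMod 2) →ₗ[ZMod 2] (E →₀ ZMod 2) :=
    LinearMap.id + (Finsupp.lapply e0 : (E →₀ ZMod 2) →ₗ[ZMod 2] ZMod 2).smulRight (c i)
  have hφ : ∀ z, φ z = z + z e0 • c i := fun z => by simp [φ]
  refine ⟨fun k => φ (c k), ?_, ?_, ?_, ?_⟩
  · intro e
    have hii : φ (c i) = 0 := by rw [hφ, hi1, one_smul, ch2]
    by_cases hj : ∃ j, j ≠ i ∧ c j e0 ≠ 0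
    · obtain ⟨j, hji, hj⟩ := hj
      have huniq : ∀ k, k ≠ i → k ≠ j → c k e0 = 0 := by
        intro k hki hkj
        by_contra hk
        have : ({i, j, k} : Finset ι) ⊆ Finset.univ.filter (fun k => c k e0 ≠ 0) := by
          intro x hx
          simp at hx
          rcases hx with rfl | rfl | rfl <;> simp [hi, hj, hk]
        have h3 := Finset.card_le_card this
        rw [Finset.card_eq_three.mpr ⟨i, j, k, hji.symm, hki.symm, hkj.symm, rfl⟩] at h3
        have := h2 e0
        omega
      by_cases hie : c i e = 0
      · refine le_trans (Finset.card_le_card ?_) (h2 e)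
        intro k hk
        simp [hφ, hie] at hk ⊢
        exact hk
      · have hle : (insert j ((Finset.univ.filter (fun k => c k e ≠ 0)).erase i)).card ≤ 2 := by
          refine (Finset.card_insert_le _ _).trans ?_
          rw [Finset.card_erase_of_mem (by simp [hie])]
          have := h2 e
          omega
        refine le_trans (Finset.card_le_card ?_) hle
        intro k hk
        simp only [Finset.mem_filter, Finset.mem_univ, true_and, Finset.mem_insert, Finset.mem_erase]
          at hk ⊢
        by_cases hkj : k = j
        · exact Or.inl hkj
        · right
          have hki : k ≠ i := by
            rintro rfl
            rw [hii] at hk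
            simp at hk
          refine ⟨hki, ?_⟩
          rwa [hφ, huniq k hki hkj, zero_smul, add_zero] at hk
    · push Not at hj
      refine le_trans (Finset.card_le_card ?_) (h2 e)
      intro k hk
      simp only [Finset.mem_filter, Finset.mem_univ, true_and] at hk ⊢
      have hki : k ≠ i := by
        rintro rfl
        rw [hii] at hk
        simp at hk
      rwa [hφ, hj k hki, zero_smul, add_zero] at hk
  · intro k
    simp only [hφ]
    exact Submodule.add_mem _ (Submodule.subset_span ⟨k, rfl⟩)
      (Submodule.smul_mem _ _ (Submodule.subset_span ⟨i, rfl⟩))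
  · intro k
    simp only [hφ]
    simp [hi1, ch2]
  · intro z hz h0
    have h1 : φ z ∈ (Submodule.span (ZMod 2) (Set.range c)).map φ := Submodule.mem_map_of_mem hz
    rw [Submodule.map_span, ← Set.range_comp] at h1
    rw [hφ, h0, zero_smul, add_zero] at h1
    exact h1

lemma tw_del_finset {ι E : Type*} [Fintype ι] [DecidableEq ι] (c : ι → (E →₀ ZMod 2))
    (h2 : ∀ e, (Finset.univ.filter (fun k => c k e ≠ 0)).card ≤ 2) (D : Finset E) :
    ∃ c' : ι → (E →₀ ZMod 2),
      (∀ e, (Finset.univ.filter (fun k => c' k e ≠ 0)).card ≤ 2) ∧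
      (∀ k, c' k ∈ Submodule.span (ZMod 2) (Set.range c)) ∧ (∀ k, ∀ e ∈ D, c' k e = 0) ∧
      ∀ z ∈ Submodule.span (ZMod 2) (Set.range c), (∀ e ∈ D, z e = 0) →
        z ∈ Submodule.span (ZMod 2) (Set.range c') := by
  classical
  induction D using Finset.induction_on with
  | empty => exact ⟨c, h2, fun k => Submodule.subset_span ⟨k, rfl⟩, by simp, fun z hz _ => hz⟩
  | insert e0 D _ ih =>
    obtain ⟨c1, a1, a2, a3, a4⟩ := ih
    obtain ⟨c2, b1, b2, b3, b4⟩ := tw_del c1 a1 e0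
    refine ⟨c2, b1, ?_, ?_, ?_⟩
    · intro k
      refine Submodule.span_le.mpr ?_ (b2 k)
      rintro _ ⟨k, rfl⟩
      exact a2 k
    · intro k e he
      rcases Finset.mem_insert.mp he with rfl | he
      · exact b3 k
      · have : Submodule.span (ZMod 2) (Set.range c1) ≤
            LinearMap.ker (Finsupp.lapply e : (E →₀ ZMod 2) →ₗ[ZMod 2] ZMod 2) := by
          refine Submodule.span_le.mpr ?_
          rintro _ ⟨k, rfl⟩
          exact a3 k e he
        exact this (b2 k)
    · intro z hz h0
      exact b4 z (a4 z hz fun e he => h0 e (Finset.mem_insert_of_mem he))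
        (h0 e0 (Finset.mem_insert_self _ _))

def gadj (x y : ℕ × ℕ) : Prop := ∃ e : GE, (gsrc e = x ∧ gtgt e = y) ∨ (gsrc e = y ∧ gtgt e = x)

def GConn (B : Set (ℕ × ℕ)) : ℕ × ℕ → ℕ × ℕ → Prop :=
  Relation.ReflTransGen (fun x y => gadj x y ∧ x ∈ B ∧ y ∈ B)

lemma gconn_chain (B : Set (ℕ × ℕ)) (x y : ℕ × ℕ) (h : GConn B x y) :
    ∃ q : GE →₀ ZMod 2, gbd q = Finsupp.single x 1 + Finsupp.single y 1 ∧
      ∀ e, q e ≠ 0 → gsrc e ∈ B ∧ gtgt e ∈ B := by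
  induction h with
  | refl => exact ⟨0, by rw [map_zero, ch2], by simp⟩
  | tail _ hbc ih =>
    rename_i b c _
    obtain ⟨q, h1, h2⟩ := ih
    obtain ⟨⟨e, he⟩, hb, hc⟩ := hbc
    refine ⟨q + Finsupp.single e 1, ?_, ?_⟩
    · rw [map_add, h1, gbd_single]
      have := ch2 (Finsupp.single b (1 : ZMod 2))
      rcases he with ⟨h, h'⟩ | ⟨h, h'⟩ <;> rw [h, h']
      · rw [add_assoc, ← add_assoc (Finsupp.single b 1) (Finsupp.single b 1), this, zero_add]
      · rw [add_comm (Finsupp.single c 1), add_assoc, ← add_assoc (Finsupp.single b 1) (Finsupp.single b 1), this, zero_add]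
    · intro e' he'
      by_cases hee : e' = e
      · subst hee
        rcases he with ⟨h, h'⟩ | ⟨h, h'⟩ <;> rw [h, h']
        · exact ⟨hb, hc⟩
        · exact ⟨hc, hb⟩
      · apply h2
        simpa [Finsupp.single_apply, Ne.symm hee] using he'

/-- boundary map of a bipartite graph -/
noncomputable def bD {A B : Type*} [Fintype A] [Fintype B] [DecidableEq A] [DecidableEq B]
    (E : Finset (A × B)) : (E → ZMod 2) →ₗ[ZMod 2] (A ⊕ B → ZMod 2) :=
  Fintype.linearCombination (ZMod 2)
    (fun e : E => Pi.single (Sum.inl e.1.1) (1 : ZMod 2) + Pi.single (Sum.inr e.1.2) (1 : ZMod 2))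

lemma bD_apply {A B : Type*} [Fintype A] [Fintype B] [DecidableEq A] [DecidableEq B]
    (E : Finset (A × B)) (z : E → ZMod 2) (u : A ⊕ B) :
    bD E z u = ∑ e : E, z e * ((if u = Sum.inl e.1.1 then 1 else 0) +
      (if u = Sum.inr e.1.2 then 1 else 0)) := by
  simp only [bD, Fintype.linearCombination_apply, Finset.sum_apply, Pi.smul_apply, Pi.add_apply,
    Pi.single_apply, smul_eq_mul]

set_option maxHeartbeats 1000000 in
lemma minor_span {A B : Type*} [Fintype A] [Fintype B] [DecidableEq A] [DecidableEq B]
    (E : Finset (A × B)) (U : A ⊕ B → Set (ℕ × ℕ)) (root : A ⊕ B → ℕ × ℕ)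
    (hdis : ∀ u v x, x ∈ U u → x ∈ U v → u = v)
    (hconn : ∀ u, ∀ x ∈ U u, GConn (U u) (root u) x)
    (hE : ∀ e ∈ E, ∃ x ∈ U (Sum.inl e.1), ∃ y ∈ U (Sum.inr e.2), gadj x y) :
    ∃ (S : Finset (ℕ × ℕ)) (c : S → (E → ZMod 2)),
      (∀ e, (Finset.univ.filter (fun k => c k e ≠ 0)).card ≤ 2) ∧
      (∀ k, bD E (c k) = 0) ∧
      ∀ z, bD E z = 0 → z ∈ Submodule.span (ZMod 2) (Set.range c) := by
  classical
  have hg : ∀ e : E, ∃ g : GE, ∃ x ∈ U (Sum.inl e.1.1), ∃ y ∈ U (Sum.inr e.1.2),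
      ((gsrc g = x ∧ gtgt g = y) ∨ (gsrc g = y ∧ gtgt g = x)) := by
    intro e
    obtain ⟨x, hx, y, hy, g, h⟩ := hE e.1 e.2
    exact ⟨g, x, hx, y, hy, h⟩
  choose g gx hgx gy hgy hg using hg
  have ginj : Function.Injective g := by
    intro e e' h
    have h1 := hg e
    have h2 := hg e'
    rw [h] at h1
    apply Subtype.ext
    have hx := hgx e
    have hy := hgy e
    have hx' := hgx e'
    have hy' := hgy e'
    rcases h1 with ⟨a1, a2⟩ | ⟨a1, a2⟩ <;> rcases h2 with ⟨b1, b2⟩ | ⟨b1, b2⟩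
    · rw [← a1, b1] at hx; rw [← a2, b2] at hy
      have k1 := Sum.inl_injective (hdis _ _ _ hx hx')
      have k2 := Sum.inr_injective (hdis _ _ _ hy hy')
      exact Prod.ext k1 k2
    · rw [← a1, b1] at hx; 
      have := hdis _ _ _ hx hy'
      simp at this
    · rw [← a1, b1] at hy
      have := hdis _ _ _ hy hx'
      simp at this
    · rw [← a2, b2] at hx; rw [← a1, b1] at hy
      have k1 := Sum.inl_injective (hdis _ _ _ hx hx')
      have k2 := Sum.inr_injective (hdis _ _ _ hy hy')
      exact Prod.ext k1 k2
  have gint : ∀ e u, ¬ (gsrc (g e) ∈ U u ∧ gtgt (g e) ∈ U u) := by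
    rintro e u ⟨h1, h2⟩
    rcases hg e with ⟨a1, a2⟩ | ⟨a1, a2⟩ <;> rw [a1] at h1 <;> rw [a2] at h2
    · exact Sum.inl_ne_inr ((hdis _ _ _ h1 (hgx e)).symm.trans (hdis _ _ _ h2 (hgy e)))
    · exact Sum.inl_ne_inr ((hdis _ _ _ h2 (hgx e)).symm.trans (hdis _ _ _ h1 (hgy e)))
  let good : GE → Prop := fun x => (∃ e, x = g e) ∨ ∃ u, gsrc x ∈ U u ∧ gtgt x ∈ U u
  have hp : ∀ e : E, ∃ p : GE →₀ ZMod 2,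
      gbd p = Finsupp.single (root (Sum.inl e.1.1)) 1 + Finsupp.single (root (Sum.inr e.1.2)) 1 ∧
      (∀ x, p x ≠ 0 → good x) ∧ ∀ e', p (g e') = if e = e' then 1 else 0 := by
    intro e
    obtain ⟨q, q1, q2⟩ := gconn_chain _ _ _ (hconn _ _ (hgx e))
    obtain ⟨r, r1, r2⟩ := gconn_chain _ _ _ (hconn _ _ (hgy e))
    refine ⟨Finsupp.single (g e) 1 + (q + r), ?_, ?_, ?_⟩
    · rw [map_add, map_add, q1, r1, gbd_single]
      have : Finsupp.single (gsrc (g e)) (1 : ZMod 2) + Finsupp.single (gtgt (g e)) 1 =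
          Finsupp.single (gx e) (1 : ZMod 2) + Finsupp.single (gy e) 1 := by
        rcases hg e with ⟨a1, a2⟩ | ⟨a1, a2⟩ <;> rw [a1, a2]
        rw [add_comm]
      rw [this]
      generalize Finsupp.single (gx e) (1 : ZMod 2) = a
      generalize Finsupp.single (gy e) (1 : ZMod 2) = b
      generalize Finsupp.single (root (Sum.inl e.1.1)) (1 : ZMod 2) = c
      generalize Finsupp.single (root (Sum.inr e.1.2)) (1 : ZMod 2) = d
      calc _ = (a + a) + (b + b) + (c + d) := by abel
        _ = _ := by rw [ch2 a, ch2 b]; simp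
    · intro x hx
      by_cases h1 : x = g e
      · exact Or.inl ⟨e, h1⟩
      right
      by_cases h2 : q x = 0
      · by_cases h3 : r x = 0
        · simp [h2, h3, Finsupp.single_apply, Ne.symm h1] at hx
        · exact ⟨_, r2 x h3⟩
      · exact ⟨_, q2 x h2⟩
    · intro e'
      have hq : q (g e') = 0 := by
        by_contra h
        exact gint _ _ (q2 _ h)
      have hr : r (g e') = 0 := by
        by_contra h
        exact gint _ _ (r2 _ h)
      simp [hq, hr, Finsupp.single_apply, ginj.eq_iff]
  choose p hp1 hp2 hp3 using hp
  let lift : (E → ZMod 2) → (GE →₀ ZMod 2) := fun z => ∑ e, z e • p e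
  have hl1 : ∀ z, bD E z = 0 → gbd (lift z) = 0 := by
    intro z hz
    have : gbd (lift z) = ∑ u : A ⊕ B, bD E z u • Finsupp.single (root u) (1 : ZMod 2) := by
      simp only [lift, map_sum, map_smul, hp1]
      simp only [bD_apply, Finset.sum_smul]
      rw [Finset.sum_comm]
      refine Finset.sum_congr rfl fun e _ => ?_
      simp only [mul_smul, ← Finset.smul_sum, add_smul, Finset.sum_add_distrib, ite_smul, one_smul,
        zero_smul, Finset.sum_ite_eq', Finset.mem_univ, if_true]
    rw [this, hz]
    simp
  have hl2 : ∀ z e, lift z (g e) = z e := by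
    intro z e
    simp [lift, Finsupp.finsetSum_apply, hp3]
  have hl3 : ∀ z x, ¬ good x → lift z x = 0 := by
    intro z x hx
    simp only [lift, Finsupp.finsetSum_apply, Finsupp.smul_apply]
    refine Finset.sum_eq_zero fun e _ => ?_
    have : p e x = 0 := by
      by_contra h
      exact hx (hp2 e x h)
    rw [this, smul_zero]
  have hS : ∀ z, ∃ S : Finset (ℕ × ℕ), bD E z = 0 →
      lift z ∈ Submodule.span (ZMod 2) (gsq '' (S : Set (ℕ × ℕ))) := by
    intro z
    by_cases hz : bD E z = 0
    · have := gcycle _ (hl1 z hz)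
      rw [Finsupp.mem_span_range_iff_exists_finsupp] at this
      obtain ⟨f, hf⟩ := this
      refine ⟨f.support, fun _ => ?_⟩
      rw [← hf]
      refine Submodule.sum_mem _ fun s hs => Submodule.smul_mem _ _ (Submodule.subset_span ⟨s, hs, rfl⟩)
    · exact ⟨∅, fun h => absurd h hz⟩
  choose Sz hSz using hS
  let S : Finset (ℕ × ℕ) := Finset.univ.biUnion Sz
  let c0 : S → (GE →₀ ZMod 2) := fun s => gsq s.1
  have hc0 : ∀ z, bD E z = 0 → lift z ∈ Submodule.span (ZMod 2) (Set.range c0) := by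
    intro z hz
    refine Submodule.span_mono ?_ (hSz z hz)
    rintro _ ⟨s, hs, rfl⟩
    exact ⟨⟨s, Finset.mem_biUnion.mpr ⟨z, Finset.mem_univ _, hs⟩⟩, rfl⟩
  let W : Finset GE := S.biUnion (fun s => (gsq s).support)
  have hW : ∀ z ∈ Submodule.span (ZMod 2) (Set.range c0), ∀ x ∉ W, z x = 0 := by
    intro z hz x hx
    have : Submodule.span (ZMod 2) (Set.range c0) ≤
        LinearMap.ker (Finsupp.lapply x : (GE →₀ ZMod 2) →ₗ[ZMod 2] ZMod 2) := by
      refine Submodule.span_le.mpr ?_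
      rintro _ ⟨k, rfl⟩
      by_contra h
      exact hx (Finset.mem_biUnion.mpr ⟨k.1, k.2, Finsupp.mem_support_iff.mpr h⟩)
    exact this hz
  have hcyc : ∀ z ∈ Submodule.span (ZMod 2) (Set.range c0), gbd z = 0 := by
    intro z hz
    have : Submodule.span (ZMod 2) (Set.range c0) ≤ LinearMap.ker gbd := by
      refine Submodule.span_le.mpr ?_
      rintro _ ⟨k, rfl⟩
      exact gbd_gsq _
    exact this hz
  obtain ⟨c1, a1, a2, a3, a4⟩ := tw_del_finset c0 (gsq_two S) (W.filter (fun x => ¬ good x))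
  let pr : (GE →₀ ZMod 2) →ₗ[ZMod 2] (E → ZMod 2) :=
    LinearMap.pi fun e => Finsupp.lapply (g e)
  refine ⟨S, fun k => pr (c1 k), fun e => a1 (g e), ?_, ?_⟩
  · intro k
    have hgood : ∀ x, ¬ good x → c1 k x = 0 := by
      intro x hx
      by_cases hxW : x ∈ W
      · exact a3 k x (by simp [hxW, hx])
      · exact hW _ (a2 k) x hxW
    have h0 := hcyc _ (a2 k)
    funext u
    rw [bD_apply]
    let χ : (ℕ × ℕ →₀ ZMod 2) →ₗ[ZMod 2] ZMod 2 :=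
      Finsupp.linearCombination (ZMod 2) (fun x => if x ∈ U u then 1 else 0)
    have h1 : χ (gbd (c1 k)) = 0 := by rw [h0, map_zero]
    let w : GE → ZMod 2 := fun x => (if gsrc x ∈ U u then 1 else 0) + (if gtgt x ∈ U u then 1 else 0)
    have h2 : χ (gbd (c1 k)) = ∑ x ∈ (c1 k).support, c1 k x * w x := by
      have hgb : gbd (c1 k) = ∑ x ∈ (c1 k).support, c1 k x •
          (Finsupp.single (gsrc x) (1 : ZMod 2) + Finsupp.single (gtgt x) 1) := by
        rw [gbd, Finsupp.linearCombination_apply, Finsupp.sum]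
      rw [hgb, map_sum]
      refine Finset.sum_congr rfl fun x _ => ?_
      simp [χ, w, mul_add]
    have h3 : ∑ x ∈ (c1 k).support, c1 k x * w x = ∑ x ∈ Finset.univ.image g, c1 k x * w x := by
      rw [Finset.sum_subset (Finset.subset_union_left (s₂ := Finset.univ.image g))]
      · symm
        apply Finset.sum_subset Finset.subset_union_right
        intro x _ hx
        by_cases hxg : good x
        · rcases hxg with ⟨e, rfl⟩ | ⟨v, hv1, hv2⟩
          · simp at hx
          · have : w x = 0 := by
              by_cases huv : u = v
              · subst huv
                simp only [w, hv1, hv2, if_true]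
                rfl
              · have n1 : gsrc x ∉ U u := fun h => huv (hdis _ _ _ h hv1)
                have n2 : gtgt x ∉ U u := fun h => huv (hdis _ _ _ h hv2)
                simp [w, n1, n2]
            rw [this, mul_zero]
        · rw [hgood x hxg, zero_mul]
      · intro x _ hx
        rw [Finsupp.notMem_support_iff.mp hx, zero_mul]
    rw [h2, h3, Finset.sum_image (fun _ _ _ _ h => ginj h)] at h1
    rw [Pi.zero_apply]
    refine Eq.trans ?_ h1
    refine Finset.sum_congr rfl fun e _ => ?_
    have e1 : gx e ∈ U u ↔ u = Sum.inl e.1.1 :=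
      ⟨fun h => hdis _ _ _ h (hgx e), fun h => h ▸ hgx e⟩
    have e2 : gy e ∈ U u ↔ u = Sum.inr e.1.2 :=
      ⟨fun h => hdis _ _ _ h (hgy e), fun h => h ▸ hgy e⟩
    have : w (g e) = (if u = Sum.inl e.1.1 then 1 else 0) + (if u = Sum.inr e.1.2 then 1 else 0) := by
      simp only [w, ← e1, ← e2]
      rcases hg e with ⟨a1, a2⟩ | ⟨a1, a2⟩ <;> rw [a1, a2]
      rw [add_comm]
    rw [this]
    rfl
  · intro z hz
    have := a4 _ (hc0 z hz) (fun x hx => hl3 z x (Finset.mem_filter.mp hx).2)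
    have h1 := Submodule.mem_map_of_mem (f := pr) this
    rw [Submodule.map_span, ← Set.range_comp] at h1
    have h2 : pr (lift z) = z := by
      funext e
      exact hl2 z e
    rwa [h2] at h1

lemma bD_four {A B : Type*} [Fintype A] [Fintype B] [DecidableEq A] [DecidableEq B]
    (E : Finset (A × B)) (z : E → ZMod 2) (hz : bD E z = 0) (hne : z ≠ 0) :
    4 ≤ (Finset.univ.filter (fun e => z e ≠ 0)).card := by
  have hA : ∀ e, z e ≠ 0 → ∃ e', z e' ≠ 0 ∧ e' ≠ e ∧ e'.1.1 = e.1.1 := by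
    intro e he
    by_contra hc
    push Not at hc
    have h := congrFun hz (Sum.inl e.1.1)
    rw [bD_apply, Finset.sum_eq_single e] at h
    · simp at h; exact he h
    · intro e' _ hne'
      by_cases h0 : z e' = 0
      · simp [h0]
      · have := hc e' h0 hne'
        simp [Ne.symm this]
    · simp
  have hB : ∀ e, z e ≠ 0 → ∃ e', z e' ≠ 0 ∧ e' ≠ e ∧ e'.1.2 = e.1.2 := by
    intro e he
    by_contra hc
    push Not at hc
    have h := congrFun hz (Sum.inr e.1.2)
    rw [bD_apply, Finset.sum_eq_single e] at h
    · simp at h; exact he h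
    · intro e' _ hne'
      by_cases h0 : z e' = 0
      · simp [h0]
      · have := hc e' h0 hne'
        simp [Ne.symm this]
    · simp
  obtain ⟨e1, h1⟩ := Function.ne_iff.mp hne
  obtain ⟨e2, h2, n2, q2⟩ := hA e1 h1
  obtain ⟨e3, h3, n3, q3⟩ := hB e1 h1
  obtain ⟨e4, h4, n4, q4⟩ := hA e3 h3
  have d13 : e3.1.1 ≠ e1.1.1 := fun h => n3 (Subtype.ext (Prod.ext h q3))
  have d32 : e3 ≠ e2 := fun h => d13 (by rw [h, q2])
  have d41 : e4 ≠ e1 := fun h => d13 (by rw [← q4, h])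
  have d42 : e4 ≠ e2 := fun h => d13 (by rw [← q4, h, q2])
  have hsub : ({e1, e2, e3, e4} : Finset E) ⊆ Finset.univ.filter (fun e => z e ≠ 0) := by
    intro x hx
    simp only [Finset.mem_insert, Finset.mem_singleton] at hx
    simp only [Finset.mem_filter, Finset.mem_univ, true_and]
    rcases hx with rfl | rfl | rfl | rfl <;> assumption
  refine le_trans (le_of_eq ?_) (Finset.card_le_card hsub)
  rw [Finset.card_insert_of_notMem, Finset.card_insert_of_notMem, Finset.card_insert_of_notMem,
    Finset.card_singleton] <;> simp [n2.symm, n3.symm, n4.symm, d32.symm, d41.symm, d42.symm]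

lemma edge_bound {A B κ : Type*} [Fintype A] [Fintype B] [DecidableEq A] [DecidableEq B]
    [Nonempty A] [Fintype κ]
    (E : Finset (A × B)) (c : κ → (E → ZMod 2))
    (h2 : ∀ e, (Finset.univ.filter (fun k => c k e ≠ 0)).card ≤ 2)
    (hk : ∀ k, bD E (c k) = 0)
    (hs : ∀ z, bD E z = 0 → z ∈ Submodule.span (ZMod 2) (Set.range c)) :
    E.card + 2 ≤ 2 * (Fintype.card A + Fintype.card B) := by
  classical
  have : Fact (Nat.Prime 2) := ⟨Nat.prime_two⟩
  let N : Finset κ := Finset.univ.filter (fun k => c k ≠ 0)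
  have hcount : 4 * N.card ≤ 2 * E.card := by
    have e1 : ∑ k ∈ N, 4 ≤ ∑ k ∈ N, (Finset.univ.filter (fun e => c k e ≠ 0)).card :=
      Finset.sum_le_sum fun k hk' => bD_four E _ (hk k) (Finset.mem_filter.mp hk').2
    have e2 : ∑ k ∈ N, (Finset.univ.filter (fun e => c k e ≠ 0)).card ≤
        ∑ k, (Finset.univ.filter (fun e => c k e ≠ 0)).card :=
      Finset.sum_le_sum_of_subset (Finset.subset_univ _)
    have e3 : ∑ k, (Finset.univ.filter (fun e => c k e ≠ 0)).card =
        ∑ e, (Finset.univ.filter (fun k => c k e ≠ 0)).card := by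
      simp only [Finset.card_filter]
      exact Finset.sum_comm
    have e4 : ∑ e, (Finset.univ.filter (fun k => c k e ≠ 0)).card ≤ ∑ e : E, 2 :=
      Finset.sum_le_sum fun e _ => h2 e
    simp only [Finset.sum_const, smul_eq_mul, Finset.card_univ, Fintype.card_coe] at e1 e4
    omega
  have hker : Module.finrank (ZMod 2) (LinearMap.ker (bD E)) ≤ N.card := by
    have : LinearMap.ker (bD E) ≤ Submodule.span (ZMod 2) ((N.image c : Finset _) : Set (E → ZMod 2)) := by
      intro z hz
      have := hs z hz
      rw [← Submodule.span_sdiff_singleton_zero] at this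
      refine Submodule.span_mono ?_ this
      rintro _ ⟨⟨k, rfl⟩, hk0⟩
      simp only [Finset.coe_image]
      exact ⟨k, by simpa [N] using hk0, rfl⟩
    exact (Submodule.finrank_mono this).trans
      ((finrank_span_finset_le_card _).trans Finset.card_image_le)
  have hrn := LinearMap.finrank_range_add_finrank_ker (bD E)
  have hr : Module.finrank (ZMod 2) (LinearMap.range (bD E)) <
      Module.finrank (ZMod 2) (A ⊕ B → ZMod 2) := by
    apply Submodule.finrank_lt
    intro htop
    obtain ⟨a⟩ := ‹Nonempty A›
    have : (Pi.single (Sum.inl a) 1 : A ⊕ B → ZMod 2) ∈ LinearMap.range (bD E) := by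
      rw [htop]; trivial
    obtain ⟨z, hz⟩ := this
    have h1 : ∑ u, bD E z u = 0 := by
      simp only [bD_apply]
      rw [Finset.sum_comm]
      refine Finset.sum_eq_zero fun e _ => ?_
      rw [← Finset.mul_sum, Finset.sum_add_distrib]
      simp only [Finset.sum_ite_eq', Finset.mem_univ, if_true]
      have : (1 + 1 : ZMod 2) = 0 := rfl
      rw [this, mul_zero]
    rw [hz] at h1
    simp at h1
  simp only [Module.finrank_fintype_fun_eq_card, Fintype.card_sum, Fintype.card_coe] at hrn hr
  omega

lemma arc_halves (f : Set (ℝ × ℝ)) (g : Set.Icc (0:ℝ) 1 → ℝ × ℝ) (hg : Continuous g)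
    (hin : ∀ t : Set.Icc (0:ℝ) 1, (t : ℝ) ≠ 0 → (t : ℝ) ≠ 1 → g t ∉ f) :
    ∃ P Q : Set (ℝ × ℝ), IsCompact P ∧ IsCompact Q ∧ IsPreconnected P ∧ IsPreconnected Q ∧
      g ⟨0, by norm_num⟩ ∈ P ∧ g ⟨1, by norm_num⟩ ∈ Q ∧ (P ∩ Q).Nonempty ∧
      (∀ x ∈ P, x ∈ f → x = g ⟨0, by norm_num⟩) ∧ (∀ x ∈ Q, x ∈ f → x = g ⟨1, by norm_num⟩) ∧
      P ⊆ Set.range g ∧ Q ⊆ Set.range g := by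
  let p : Set.Icc (0:ℝ) 1 → Set.Icc (0:ℝ) 1 := fun t =>
    ⟨t / 2, by have := t.2.1; have := t.2.2; constructor <;> linarith⟩
  let q : Set.Icc (0:ℝ) 1 → Set.Icc (0:ℝ) 1 := fun t =>
    ⟨1 - t / 2, by have := t.2.1; have := t.2.2; constructor <;> linarith⟩
  have hp : Continuous p := by
    apply Continuous.subtype_mk; fun_prop
  have hq : Continuous q := by
    apply Continuous.subtype_mk; fun_prop
  have : PreconnectedSpace (Set.Icc (0:ℝ) 1) := Subtype.preconnectedSpace isPreconnected_Icc
  refine ⟨Set.range (g ∘ p), Set.range (g ∘ q), isCompact_range (hg.comp hp),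
    isCompact_range (hg.comp hq), isPreconnected_range (hg.comp hp),
    isPreconnected_range (hg.comp hq), ⟨⟨0, by norm_num⟩, ?_⟩, ⟨⟨0, by norm_num⟩, ?_⟩,
    ⟨g ⟨1/2, by norm_num⟩, ⟨⟨1, by norm_num⟩, ?_⟩, ⟨⟨1, by norm_num⟩, ?_⟩⟩, ?_, ?_, ?_, ?_⟩
  · simp [p]
  · simp [q]
  · simp [p]
  · simp only [q, Function.comp]; congr 2; norm_num
  · rintro _ ⟨t, rfl⟩ hf
    by_contra hne
    have h2 := t.2.2
    refine hin (p t) ?_ ?_ hf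
    · intro h
      apply hne
      simp only [Function.comp]
      congr 1
      exact Subtype.ext h
    · simp only [p]; intro h; linarith
  · rintro _ ⟨t, rfl⟩ hf
    by_contra hne
    have h2 := t.2.2
    refine hin (q t) ?_ ?_ hf
    · simp only [q]; intro h; linarith
    · intro h
      apply hne
      simp only [Function.comp]
      congr 1
      exact Subtype.ext h
  · exact Set.range_comp_subset_range _ _
  · exact Set.range_comp_subset_range _ _

lemma planar_halves {V A B : Type*} (G : SimpleGraph V) (hG : IsPlanar G)
    (α : A → V) (β : B → V) (hα : Function.Injective α) (hβ : Function.Injective β)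
    (hαβ : ∀ a b, α a ≠ β b) :
    ∃ (pa : A → ℝ × ℝ) (pb : B → ℝ × ℝ) (P Q : A → B → Set (ℝ × ℝ)),
      (∀ a b, IsCompact (P a b)) ∧ (∀ a b, IsCompact (Q a b)) ∧
      (∀ a b, IsPreconnected (P a b)) ∧ (∀ a b, IsPreconnected (Q a b)) ∧
      (∀ a b, pa a ∈ P a b) ∧ (∀ a b, pb b ∈ Q a b) ∧
      (∀ a b, G.Adj (α a) (β b) → (P a b ∩ Q a b).Nonempty) ∧
      (∀ a b a' b', a ≠ a' → Disjoint (P a b) (P a' b')) ∧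
      (∀ a b a' b', b ≠ b' → Disjoint (Q a b) (Q a' b')) ∧
      (∀ a b a' b', b ≠ b' → Disjoint (P a b) (Q a' b')) ∧
      (∀ a a' b', Disjoint {pa a} (Q a' b')) ∧
      (∀ a b, ∀ x ∈ P a b, 0 < x.1 ∧ 0 < x.2) ∧ (∀ a b, ∀ x ∈ Q a b, 0 < x.1 ∧ 0 < x.2) := by
  classical
  obtain ⟨f0, γ0, hf0, hγ0, hend0, -, hint0, hdis0⟩ := hG
  let Φ : ℝ × ℝ → ℝ × ℝ := fun x => (Real.exp x.1, Real.exp x.2)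
  have hΦc : Continuous Φ := by fun_prop
  have hΦi : Function.Injective Φ := by
    intro x y h
    have h1 := (Prod.ext_iff.mp h).1
    have h2 := (Prod.ext_iff.mp h).2
    exact Prod.ext (Real.exp_injective h1) (Real.exp_injective h2)
  have hΦp : ∀ x, 0 < (Φ x).1 ∧ 0 < (Φ x).2 := fun x => ⟨Real.exp_pos _, Real.exp_pos _⟩
  let f : V → ℝ × ℝ := fun v => Φ (f0 v)
  have hf : Function.Injective f := hΦi.comp hf0
  let R : A → B → Set (ℝ × ℝ) := fun a b =>
    if h : G.Adj (α a) (β b) then Set.range (fun t => Φ (γ0 ⟨s(α a, β b), h⟩ t)) else ∅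
  have hR : ∀ a b a' b', (a, b) ≠ (a', b') → ∀ x ∈ R a b, x ∈ R a' b' → x ∈ Set.range f := by
    intro a b a' b' hne x hx hx'
    by_cases h : G.Adj (α a) (β b)
    · by_cases h' : G.Adj (α a') (β b')
      · simp only [R, h, h', dite_true] at hx hx'
        obtain ⟨s, rfl⟩ := hx
        obtain ⟨t, ht⟩ := hx'
        have hne' : (⟨s(α a, β b), h⟩ : G.edgeSet) ≠ ⟨s(α a', β b'), h'⟩ := by
          intro he
          have := Subtype.ext_iff.mp he
          simp only [Sym2.eq_iff] at this
          rcases this with ⟨h1, h2⟩ | ⟨h1, h2⟩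
          · exact hne (Prod.ext (hα h1) (hβ h2))
          · exact hαβ _ _ h1
        obtain ⟨v, hv⟩ := hdis0 _ _ hne' s t (hΦi ht.symm)
        exact ⟨v, by simp only [f, hv]⟩
      · simp [R, h'] at hx'
    · simp [R, h] at hx
  have key : ∀ a b, ∃ P Q : Set (ℝ × ℝ), IsCompact P ∧ IsCompact Q ∧ IsPreconnected P ∧
      IsPreconnected Q ∧ f (α a) ∈ P ∧ f (β b) ∈ Q ∧ (G.Adj (α a) (β b) → (P ∩ Q).Nonempty) ∧
      (∀ x ∈ P, x ∈ Set.range f → x = f (α a)) ∧ (∀ x ∈ Q, x ∈ Set.range f → x = f (β b)) ∧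
      (∀ x ∈ P, x ∈ Set.range f ∨ x ∈ R a b) ∧ (∀ x ∈ Q, x ∈ Set.range f ∨ x ∈ R a b) ∧
      (∀ x ∈ P, 0 < x.1 ∧ 0 < x.2) ∧ (∀ x ∈ Q, 0 < x.1 ∧ 0 < x.2) := by
    intro a b
    by_cases h : G.Adj (α a) (β b)
    · let e : G.edgeSet := ⟨s(α a, β b), h⟩
      have hRe : R a b = Set.range (fun t => Φ (γ0 e t)) := by simp [R, h, e]
      obtain ⟨P, Q, h1, h2, h3, h4, h5, h6, h7, h8, h9, h10, h11⟩ :=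
        arc_halves (Set.range f) (fun t => Φ (γ0 e t)) (hΦc.comp (hγ0 e)) (by
          rintro t t0 t1 ⟨v, hv⟩
          exact hint0 e t t0 t1 v (hΦi hv.symm))
      have hpos : ∀ x ∈ Set.range (fun t => Φ (γ0 e t)), 0 < x.1 ∧ 0 < x.2 := by
        rintro _ ⟨t, rfl⟩
        exact hΦp _
      obtain ⟨u, v, huv, hu, hv⟩ := hend0 e
      simp only [hu, hv] at h5 h6 h8 h9
      have huv' : s(α a, β b) = s(u, v) := huv
      rw [Sym2.eq_iff] at huv'
      rcases huv' with ⟨rfl, rfl⟩ | ⟨rfl, rfl⟩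
      · exact ⟨P, Q, h1, h2, h3, h4, h5, h6, fun _ => h7, h8, h9,
          fun x hx => Or.inr (hRe ▸ h10 hx), fun x hx => Or.inr (hRe ▸ h11 hx),
          fun x hx => hpos x (h10 hx), fun x hx => hpos x (h11 hx)⟩
      · exact ⟨Q, P, h2, h1, h4, h3, h6, h5, fun _ => Set.inter_comm P Q ▸ h7, h9, h8,
          fun x hx => Or.inr (hRe ▸ h11 hx), fun x hx => Or.inr (hRe ▸ h10 hx),
          fun x hx => hpos x (h11 hx), fun x hx => hpos x (h10 hx)⟩
    · refine ⟨{f (α a)}, {f (β b)}, isCompact_singleton, isCompact_singleton,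
        isPreconnected_singleton, isPreconnected_singleton, rfl, rfl, fun h' => absurd h' h,
        fun x hx _ => hx, fun x hx _ => hx, ?_, ?_, ?_, ?_⟩
      · rintro x rfl; exact Or.inl ⟨_, rfl⟩
      · rintro x rfl; exact Or.inl ⟨_, rfl⟩
      · rintro x rfl; exact hΦp _
      · rintro x rfl; exact hΦp _
  choose P Q h1 h2 h3 h4 h5 h6 h7 h8 h9 h10 h11 h12 h13 using key
  refine ⟨fun a => f (α a), fun b => f (β b), P, Q, h1, h2, h3, h4, h5, h6, h7, ?_, ?_, ?_, ?_,
    h12, h13⟩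
  · intro a b a' b' hne
    rw [Set.disjoint_left]
    intro x hx hx'
    have : x ∈ Set.range f := by
      rcases h10 a b x hx with h | h
      · exact h
      rcases h10 a' b' x hx' with h' | h'
      · exact h'
      exact hR a b a' b' (fun h => hne (Prod.ext_iff.mp h).1) x h h'
    have e1 := h8 a b x hx this
    have e2 := h8 a' b' x hx' this
    exact hne (hα (hf (e1.symm.trans e2)))
  · intro a b a' b' hne
    rw [Set.disjoint_left]
    intro x hx hx'
    have : x ∈ Set.range f := by
      rcases h11 a b x hx with h | h
      · exact h
      rcases h11 a' b' x hx' with h' | h'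
      · exact h'
      exact hR a b a' b' (fun h => hne (Prod.ext_iff.mp h).2) x h h'
    have e1 := h9 a b x hx this
    have e2 := h9 a' b' x hx' this
    exact hne (hβ (hf (e1.symm.trans e2)))
  · intro a b a' b' hne
    rw [Set.disjoint_left]
    intro x hx hx'
    have : x ∈ Set.range f := by
      rcases h10 a b x hx with h | h
      · exact h
      rcases h11 a' b' x hx' with h' | h'
      · exact h'
      exact hR a b a' b' (fun h => hne (Prod.ext_iff.mp h).2) x h h'
    have e1 := h8 a b x hx this
    have e2 := h9 a' b' x hx' this
    exact hαβ _ _ (hf (e1.symm.trans e2))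
  · intro a a' b'
    rw [Set.disjoint_left]
    rintro x rfl hx'
    exact hαβ _ _ (hf (h9 a' b' _ hx' ⟨_, rfl⟩))

def blk (h : ℝ) (s : ℝ × ℝ) : Set (ℕ × ℕ) :=
  {x | |s.1 - h * x.1| < h ∧ |s.2 - h * x.2| < h}

def bN (h : ℝ) (S : Set (ℝ × ℝ)) : Set (ℕ × ℕ) := {x | ∃ s ∈ S, x ∈ blk h s}

noncomputable def fl (h : ℝ) (s : ℝ × ℝ) : ℕ × ℕ := (⌊s.1 / h⌋₊, ⌊s.2 / h⌋₊)

lemma fl_mem (h : ℝ) (hh : 0 < h) (s : ℝ × ℝ) (hs : 0 < s.1 ∧ 0 < s.2) : fl h s ∈ blk h s := by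
  have key : ∀ r : ℝ, 0 < r → |r - h * (⌊r / h⌋₊ : ℕ)| < h := by
    intro r hr
    have h1 := Nat.floor_le (div_pos hr hh).le
    have h2 := Nat.lt_floor_add_one (r / h)
    rw [le_div_iff₀ hh] at h1
    rw [div_lt_iff₀ hh] at h2
    rw [abs_lt]
    constructor <;> nlinarith
  exact ⟨key _ hs.1, key _ hs.2⟩

lemma gadj_symm {x y : ℕ × ℕ} (h : gadj x y) : gadj y x := by
  obtain ⟨e, h⟩ := h
  exact ⟨e, h.symm⟩

lemma GConn.mono {B C : Set (ℕ × ℕ)} (h : B ⊆ C) {x y : ℕ × ℕ} (hxy : GConn B x y) :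
    GConn C x y := by
  induction hxy with
  | refl => exact Relation.ReflTransGen.refl
  | tail _ hbc ih => exact ih.tail ⟨hbc.1, h hbc.2.1, h hbc.2.2⟩

lemma GConn.symm {B : Set (ℕ × ℕ)} {x y : ℕ × ℕ} (hxy : GConn B x y) : GConn B y x := by
  induction hxy with
  | refl => exact Relation.ReflTransGen.refl
  | tail _ hbc ih => exact Relation.ReflTransGen.head ⟨gadj_symm hbc.1, hbc.2.2, hbc.2.1⟩ ih

lemma near_nat (h r : ℝ) (i j : ℕ) (hi : |r - h * i| < h) (hj : |r - h * j| < h) :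
    i = j ∨ i = j + 1 ∨ j = i + 1 := by
  have hh : 0 < h := lt_of_le_of_lt (abs_nonneg _) hi
  rw [abs_lt] at hi hj
  have h1 : (i : ℝ) < j + 2 := by
    have : h * i < h * (j + 2) := by linarith
    exact lt_of_mul_lt_mul_left this hh.le
  have h2 : (j : ℝ) < i + 2 := by
    have : h * j < h * (i + 2) := by linarith
    exact lt_of_mul_lt_mul_left this hh.le
  have h3 : i < j + 2 := by exact_mod_cast h1
  have h4 : j < i + 2 := by exact_mod_cast h2
  omega

lemma blk_conn (h : ℝ) (s : ℝ × ℝ) (x y : ℕ × ℕ) (hx : x ∈ blk h s) (hy : y ∈ blk h s) :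
    GConn (blk h s) x y := by
  obtain ⟨x1, x2⟩ := x
  obtain ⟨y1, y2⟩ := y
  have hm : (y1, x2) ∈ blk h s := ⟨hy.1, hx.2⟩
  have c1 : GConn (blk h s) (x1, x2) (y1, x2) := by
    rcases near_nat h s.1 x1 y1 hx.1 hy.1 with rfl | rfl | rfl
    · exact Relation.ReflTransGen.refl
    · exact Relation.ReflTransGen.single ⟨⟨(y1, x2, true), Or.inr ⟨rfl, rfl⟩⟩, hx, hm⟩
    · exact Relation.ReflTransGen.single ⟨⟨(x1, x2, true), Or.inl ⟨rfl, rfl⟩⟩, hx, hm⟩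
  have c2 : GConn (blk h s) (y1, x2) (y1, y2) := by
    rcases near_nat h s.2 x2 y2 hx.2 hy.2 with rfl | rfl | rfl
    · exact Relation.ReflTransGen.refl
    · exact Relation.ReflTransGen.single ⟨⟨(y1, y2, false), Or.inr ⟨rfl, rfl⟩⟩, hm, hy⟩
    · exact Relation.ReflTransGen.single ⟨⟨(y1, x2, false), Or.inl ⟨rfl, rfl⟩⟩, hm, hy⟩
  exact Relation.ReflTransGen.trans c1 c2

lemma bN_conn (h : ℝ) (hh : 0 < h) (S : Set (ℝ × ℝ)) (hS : IsPreconnected S)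
    (hpos : ∀ s ∈ S, 0 < s.1 ∧ 0 < s.2) (x y : ℕ × ℕ) (hx : x ∈ bN h S) (hy : y ∈ bN h S) :
    GConn (bN h S) x y := by
  obtain ⟨s, hs, hxs⟩ := hx
  obtain ⟨t, ht, hyt⟩ := hy
  have sub : ∀ s ∈ S, blk h s ⊆ bN h S := fun s hs x hx => ⟨s, hs, hx⟩
  have key : ∀ x ∈ blk h s, ∀ y ∈ blk h t, GConn (bN h S) x y := by
    refine IsPreconnected.induction₂ hS
      (fun s t => ∀ x ∈ blk h s, ∀ y ∈ blk h t, GConn (bN h S) x y) ?_ ?_ ?_ hs ht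
    · intro s hs
      have hf := fl_mem h hh s (hpos s hs)
      have ho : ∀ᶠ t in nhdsWithin s S, fl h s ∈ blk h t := by
        apply Filter.Eventually.filter_mono nhdsWithin_le_nhds
        have : IsOpen {t : ℝ × ℝ | |t.1 - h * (fl h s).1| < h ∧ |t.2 - h * (fl h s).2| < h} := by
          have o1 : IsOpen {t : ℝ × ℝ | |t.1 - h * (fl h s).1| < h} :=
            isOpen_lt (by fun_prop) (by fun_prop)
          have o2 : IsOpen {t : ℝ × ℝ | |t.2 - h * (fl h s).2| < h} :=
            isOpen_lt (by fun_prop) (by fun_prop)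
          exact o1.inter o2
        exact this.mem_nhds hf
      filter_upwards [ho, self_mem_nhdsWithin] with t ht htS x hx y hy
      exact Relation.ReflTransGen.trans ((blk_conn h s _ _ hx hf).mono (sub s hs))
        ((blk_conn h t _ _ ht hy).mono (sub t htS))
    · intro r s t hr hs ht h1 h2 x hx y hy
      have hf := fl_mem h hh s (hpos s hs)
      exact Relation.ReflTransGen.trans (h1 _ hx _ hf) (h2 _ hf _ hy)
    · intro s t hs ht h1 x hx y hy
      exact (h1 _ hy _ hx).symm
  exact key x hxs y hyt

lemma bN_sep (S T : Set (ℝ × ℝ)) (hS : IsCompact S) (hT : IsCompact T) (hd : Disjoint S T) :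
    ∀ᶠ h in nhdsWithin (0:ℝ) (Set.Ioi 0), ∀ x, x ∈ bN h S → x ∈ bN h T → False := by
  obtain ⟨δ, hδ, hdis⟩ := hd.exists_thickenings hS hT.isClosed
  filter_upwards [Ioo_mem_nhdsGT hδ] with h hh x ⟨s, hs, hxs⟩ ⟨t, ht, hxt⟩
  refine (Set.disjoint_left.mp hdis : ∀ ⦃a⦄, _) (a := ((h * x.1, h * x.2) : ℝ × ℝ)) ?_ ?_
  · rw [Metric.mem_thickening_iff]
    refine ⟨s, hs, ?_⟩
    rw [_root_.dist_comm, Prod.dist_eq]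
    exact max_lt (lt_trans hxs.1 hh.2) (lt_trans hxs.2 hh.2)
  · rw [Metric.mem_thickening_iff]
    refine ⟨t, ht, ?_⟩
    rw [_root_.dist_comm, Prod.dist_eq]
    exact max_lt (lt_trans hxt.1 hh.2) (lt_trans hxt.2 hh.2)

lemma gconn_self (B : Set (ℕ × ℕ)) (r x : ℕ × ℕ) (hx : GConn B r x) :
    GConn {y | GConn B r y} r x := by
  induction hx with
  | refl => exact Relation.ReflTransGen.refl
  | tail hb hbc ih => exact ih.tail ⟨hbc.1, hb, hb.tail hbc⟩

theorem planar_bip_bound {V A B : Type*} [Fintype A] [Fintype B] [DecidableEq A] [DecidableEq B]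
    [Nonempty A] [Nonempty B] (G : SimpleGraph V) (hG : IsPlanar G)
    (α : A → V) (β : B → V) (hα : Function.Injective α) (hβ : Function.Injective β)
    (hαβ : ∀ a b, α a ≠ β b) (E : Finset (A × B)) (hE : ∀ e ∈ E, G.Adj (α e.1) (β e.2)) :
    E.card + 2 ≤ 2 * (Fintype.card A + Fintype.card B) := by
  obtain ⟨pa, pb, P, Q, cP, cQ, nP, nQ, mP, mQ, hadj, dPP, dQQ, dPQ, dpQ, pP, pQ⟩ :=
    planar_halves G hG α β hα hβ hαβ
  have hev : ∀ᶠ h in nhdsWithin (0:ℝ) (Set.Ioi 0),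
      (∀ a b a' b', a ≠ a' → ∀ x, x ∈ bN h (P a b) → x ∈ bN h (P a' b') → False) ∧
      (∀ a b a' b', b ≠ b' → ∀ x, x ∈ bN h (Q a b) → x ∈ bN h (Q a' b') → False) ∧
      (∀ a b a' b', b ≠ b' → ∀ x, x ∈ bN h (P a b) → x ∈ bN h (Q a' b') → False) ∧
      (∀ a a' b', ∀ x, x ∈ bN h {pa a} → x ∈ bN h (Q a' b') → False) ∧ 0 < h := by
    refine Filter.Eventually.and ?_ (Filter.Eventually.and ?_ (Filter.Eventually.and ?_
      (Filter.Eventually.and ?_ self_mem_nhdsWithin)))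
    · simp only [Filter.eventually_all]
      intro a b a' b' hne
      exact bN_sep _ _ (cP _ _) (cP _ _) (dPP _ _ _ _ hne)
    · simp only [Filter.eventually_all]
      intro a b a' b' hne
      exact bN_sep _ _ (cQ _ _) (cQ _ _) (dQQ _ _ _ _ hne)
    · simp only [Filter.eventually_all]
      intro a b a' b' hne
      exact bN_sep _ _ (cP _ _) (cQ _ _) (dPQ _ _ _ _ hne)
    · simp only [Filter.eventually_all]
      intro a a' b'
      exact bN_sep _ _ isCompact_singleton (cQ _ _) (dpQ _ _ _)
  obtain ⟨h, ePP, eQQ, ePQ, epQ, hh⟩ := hev.exists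
  let a0 : A := Classical.arbitrary A
  let b0 : B := Classical.arbitrary B
  let UB : B → Set (ℕ × ℕ) := fun b => {x | ∃ a, x ∈ bN h (Q a b)}
  let WA : A → Set (ℕ × ℕ) := fun a => {x | (∃ b, x ∈ bN h (P a b)) ∧ ∀ b, x ∉ UB b}
  let UA : A → Set (ℕ × ℕ) := fun a => {x | GConn (WA a) (fl h (pa a)) x}
  have hr : ∀ a, fl h (pa a) ∈ WA a := by
    intro a
    have hf := fl_mem h hh (pa a) (pP a b0 _ (mP a b0))
    refine ⟨⟨b0, pa a, mP a b0, hf⟩, ?_⟩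
    rintro b ⟨a', hx⟩
    exact epQ a a' b _ ⟨pa a, rfl, hf⟩ hx
  have hUA : ∀ a, UA a ⊆ WA a := by
    intro a x hx
    rcases Relation.ReflTransGen.cases_tail hx with hx | ⟨c, _, hc⟩
    · rw [hx]; exact hr a
    · exact hc.2.2
  have hms := minor_span E (Sum.elim UA UB)
    (Sum.elim (fun a => fl h (pa a)) (fun b => fl h (pb b)))
  replace hms := hms (by
    rintro (a | b) (a' | b') x hx hx'
    · by_contra hne
      obtain ⟨⟨b, hb⟩, -⟩ := hUA a hx
      obtain ⟨⟨b', hb'⟩, -⟩ := hUA a' hx'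
      exact ePP a b a' b' (fun h => hne (by rw [h])) x hb hb'
    · exact absurd hx' ((hUA a hx).2 b')
    · exact absurd hx ((hUA a' hx').2 b)
    · by_contra hne
      obtain ⟨a, ha⟩ := hx
      obtain ⟨a', ha'⟩ := hx'
      exact eQQ a b a' b' (fun h => hne (by rw [h])) x ha ha')
  replace hms := hms (by
    rintro (a | b) x hx
    · exact gconn_self _ _ _ hx
    · obtain ⟨a, ha⟩ := hx
      have hf := fl_mem h hh (pb b) (pQ a b _ (mQ a b))
      exact (bN_conn h hh (Q a b) (nQ a b) (pQ a b) _ _ ⟨pb b, mQ a b, hf⟩ ha).mono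
        (show bN h (Q a b) ⊆ UB b from fun x hx => ⟨a, hx⟩))
  replace hms := hms (by
    rintro ⟨a, b⟩ he
    obtain ⟨m, hmP, hmQ⟩ := hadj a b (hE _ he)
    have hfm := fl_mem h hh m (pP a b m hmP)
    have hfa := fl_mem h hh (pa a) (pP a b _ (mP a b))
    have hwalk := bN_conn h hh (P a b) (nP a b) (pP a b) (fl h (pa a)) (fl h m)
      ⟨pa a, mP a b, hfa⟩ ⟨m, hmP, hfm⟩
    have key : ∀ z, GConn (bN h (P a b)) (fl h (pa a)) z → z ∈ UA a ∨
        ∃ x ∈ UA a, ∃ y ∈ UB b, gadj x y := by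
      intro z hz
      induction hz with
      | refl => exact Or.inl Relation.ReflTransGen.refl
      | tail _ hbc ih =>
        rename_i y z _
        rcases ih with ih | ih
        · by_cases hzU : ∃ b', z ∈ UB b'
          · obtain ⟨b', a', hb'⟩ := hzU
            by_cases hbb : b = b'
            · subst hbb
              exact Or.inr ⟨y, ih, z, ⟨a', hb'⟩, hbc.1⟩
            · exact (ePQ a b a' b' hbb z hbc.2.2 hb').elim
          · push Not at hzU
            exact Or.inl (Relation.ReflTransGen.tail ih
              ⟨hbc.1, hUA a ih, ⟨b, hbc.2.2⟩, hzU⟩)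
        · exact Or.inr ih
    rcases key _ hwalk with h1 | h1
    · exact absurd ⟨a, m, hmQ, hfm⟩ ((hUA a h1).2 b)
    · exact h1)
  obtain ⟨S, c, s1, s2, s3⟩ := hms
  exact edge_bound E c s1 s2 s3

/-- slots of the vertices of the second and third part -/
def su (s : Bool) (i : ℕ) : ℕ :=
  if s then (if i = 0 then 0 else if i = 1 then 2 else if i = 2 then 6 else 8)
  else if i < 2 then 10 else 4

def sv (s : Bool) (i : ℕ) : ℕ :=
  if s then (if i = 0 then 3 else if i = 1 then 5 else if i = 2 then 9 else 11)
  else if i < 2 then 1 else 7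

def upL : List (ℕ × ℕ) := [(0,1),(3,4),(6,7),(9,10),(2,3),(5,6),(8,9),(0,11),(0,3),(0,5),(0,9),(5,8)]
def dnL : List (ℕ × ℕ) := [(1,2),(4,5),(7,8),(10,11),(2,11),(2,9),(6,9),(3,6)]
def bundles : List ℕ := [1, 4, 7, 10, 12]

lemma L_lt : ∀ e ∈ upL ++ dnL, e.1 < e.2 := by decide

lemma L_cross : ∀ e ∈ upL ++ dnL, ∀ f ∈ upL ++ dnL, e.1 ≤ f.1 → f.1 ≤ e.2 → e.2 ≤ f.2 →
    (e.1 = f.1 → e.1 ∈ bundles) → (f.1 = e.2 → f.1 ∈ bundles) → (e.2 = f.2 → e.2 ∈ bundles) →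
    (e ∈ upL ↔ f ∈ upL) → False := by decide

def slot (r : ℕ) (c : ℕ × ℕ) : ℕ :=
  if c.1 = 1 then su (decide (c.2 / 4 = r)) (c.2 % 4)
  else if c.1 = 2 then sv (decide (c.2 / 4 = r)) (c.2 % 4) else 12

lemma su_mem : ∀ s i, su s i ∈ [0, 2, 6, 8, 10, 4] := by
  intro s i
  unfold su
  split_ifs <;> decide

lemma sv_mem : ∀ s i, sv s i ∈ [3, 5, 9, 11, 1, 7] := by
  intro s i
  unfold sv
  split_ifs <;> decide

lemma suv_ne : ∀ a ∈ [0, 2, 6, 8, 10, 4], ∀ b ∈ [3, 5, 9, 11, 1, 7], a ≠ b := by decide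
lemma su_ne : ∀ a ∈ [0, 2, 6, 8, 10, 4], a ≠ 12 := by decide
lemma sv_ne : ∀ a ∈ [3, 5, 9, 11, 1, 7], a ≠ 12 := by decide

lemma su_inj : ∀ i < 4, ∀ j < 4, ∀ s t, su s i = su t j →
    su s i ∉ bundles → i = j ∧ s = true ∧ t = true := by
  intro i hi j hj s t
  interval_cases i <;> interval_cases j <;> revert s t <;> decide
lemma sv_inj : ∀ i < 4, ∀ j < 4, ∀ s t, sv s i = sv t j →
    sv s i ∉ bundles → i = j ∧ s = true ∧ t = true := by
  intro i hi j hj s t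
  interval_cases i <;> interval_cases j <;> revert s t <;> decide

lemma slot_cls (r : ℕ) (c d : ℕ × ℕ) (hc : c.1 < 3) (hd : d.1 < 3) (h : slot r c = slot r d) :
    c.1 = d.1 := by
  obtain ⟨c1, c2⟩ := c
  obtain ⟨d1, d2⟩ := d
  simp only at hc hd ⊢
  have hu := su_mem
  have hv := sv_mem
  interval_cases c1 <;> interval_cases d1 <;> simp only [slot] at h <;>
    simp only [if_true, if_false, OfNat.ofNat_ne_one, OfNat.one_ne_ofNat, OfNat.zero_ne_ofNat, zero_ne_one] at h <;> first
    | rfl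
    | exact absurd h (suv_ne _ (hu _ _) _ (hv _ _))
    | exact absurd h.symm (suv_ne _ (hu _ _) _ (hv _ _))
    | exact absurd h (su_ne _ (hu _ _))
    | exact absurd h.symm (su_ne _ (hu _ _))
    | exact absurd h (sv_ne _ (hv _ _))
    | exact absurd h.symm (sv_ne _ (hv _ _))

lemma slot_single (r : ℕ) (c d : ℕ × ℕ) (hc : c.1 < 3) (hd : d.1 < 3)
    (h : slot r c = slot r d) (hb : slot r c ∉ bundles) : c = d := by
  have h1 := slot_cls r c d hc hd h
  obtain ⟨c1, c2⟩ := c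
  obtain ⟨d1, d2⟩ := d
  simp only at h1 hc
  subst h1
  have l1 := Nat.mod_lt c2 (show 4 > 0 by norm_num)
  have l2 := Nat.mod_lt d2 (show 4 > 0 by norm_num)
  interval_cases c1
  · simp [slot, bundles] at hb
  · simp only [slot, if_true] at h hb
    obtain ⟨e1, e2, e3⟩ := su_inj _ l1 _ l2 _ _ h hb
    simp only [decide_eq_true_eq] at e2 e3
    have : c2 = d2 := by omega
    rw [this]
  · simp only [slot] at h hb
    simp only [if_false, if_true, OfNat.ofNat_ne_one] at h hb
    obtain ⟨e1, e2, e3⟩ := sv_inj _ l1 _ l2 _ _ h hb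
    simp only [decide_eq_true_eq] at e2 e3
    have : c2 = d2 := by omega
    rw [this]

lemma slot_planar {V : Type*} (G : SimpleGraph V) (code : V → ℕ × ℕ)
    (hcode : Function.Injective code) (n r : ℕ) (h3 : ∀ v, (code v).1 < 3)
    (hn : ∀ v, (code v).2 < n)
    (hG : ∀ v w, G.Adj v w → (slot r (code v), slot r (code w)) ∈ upL ++ dnL ∨
      (slot r (code w), slot r (code v)) ∈ upL ++ dnL) : IsPlanar G := by
  have hlt : ∀ v w, slot r (code v) * n + (code v).2 < slot r (code w) * n + (code w).2 →
      slot r (code v) ≤ slot r (code w) := by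
    intro v w h
    by_contra hlt
    push Not at hlt
    have := hn v
    have := hn w
    have : (slot r (code w) + 1) * n ≤ slot r (code v) * n := Nat.mul_le_mul_right _ hlt
    nlinarith
  refine book_planar G (fun v => slot r (code v) * n + (code v).2) ?_
    (fun v w => (slot r (code v), slot r (code w)) ∈ upL) ?_
  · intro v w h
    beta_reduce at h
    have hv := hn v
    have hw := hn w
    have e1 : slot r (code v) = slot r (code w) := by
      have h0 : 0 < n := by omega
      have := congrArg (· / n) h
      rwa [mul_comm, Nat.mul_add_div h0, mul_comm (slot r (code w)), Nat.mul_add_div h0,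
        Nat.div_eq_of_lt hv, Nat.div_eq_of_lt hw] at this
    have e2 := slot_cls r _ _ (h3 v) (h3 w) e1
    rw [e1] at h
    exact hcode (Prod.ext e2 (by omega))
  · intro a b c d hab hcd h1 h2 h4 hup
    have ne : ∀ v w, slot r (code v) * n + (code v).2 < slot r (code w) * n + (code w).2 →
        slot r (code v) = slot r (code w) → slot r (code v) ∈ bundles := by
      intro v w h e
      by_contra hb
      rw [slot_single r _ _ (h3 v) (h3 w) e hb] at h
      exact lt_irrefl _ h
    have or : ∀ v w, G.Adj v w → slot r (code v) * n + (code v).2 < slot r (code w) * n + (code w).2 →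
        (slot r (code v), slot r (code w)) ∈ upL ++ dnL := by
      intro v w h hl
      rcases hG v w h with h | h
      · exact h
      · have := L_lt _ h
        have := hlt _ _ hl
        omega
    exact L_cross _ (or a b hab (h1.trans h2)) _ (or c d hcd (h2.trans h4)) (hlt _ _ h1) (hlt _ _ h2)
      (hlt _ _ h4) (ne _ _ h1) (ne _ _ h2) (ne _ _ h4) hup

def fu (i : ℕ) : ℕ := if i = 0 then 7 else if i = 1 then 1 else if i = 2 then 3 else 5
def fv (i : ℕ) : ℕ := if i = 0 then 6 else if i = 1 then 2 else if i = 2 then 8 else 4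

def fpos (n : ℕ) (c : ℕ × ℕ) : ℕ :=
  if c.1 = 1 then 8 * (c.2 / 4) + fu (c.2 % 4)
  else if c.1 = 2 then 8 * (c.2 / 4) + fv (c.2 % 4) else c.2 * (2 * n + 1)

lemma last_planar {V : Type*} (G : SimpleGraph V) (code : V → ℕ × ℕ)
    (hcode : Function.Injective code) (p : ℕ) (h3 : ∀ v, (code v).1 < 3)
    (hn0 : ∀ v, (code v).1 = 0 → (code v).2 < 2)
    (hn : ∀ v, (code v).1 ≠ 0 → (code v).2 < 4 * p)
    (hG : ∀ v w, G.Adj v w → (code v).1 ≠ (code w).1 ∧ ((code v).1 = 0 ∨ (code w).1 = 0 ∨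
      fpos (4 * p) (code v) = fpos (4 * p) (code w) + 1 ∨
      fpos (4 * p) (code w) = fpos (4 * p) (code v) + 1)) : IsPlanar G := by
  have b0 : ∀ v, (code v).1 = 0 →
      (fpos (4 * p) (code v) = 0 ∧ (code v).2 = 0) ∨ (fpos (4 * p) (code v) = 8 * p + 1 ∧ (code v).2 = 1) := by
    intro v hv
    have := hn0 v hv
    have h : (code v).2 = 0 ∨ (code v).2 = 1 := by omega
    rcases h with h | h <;> simp [fpos, hv, h]
    omega
  have b1 : ∀ v, (code v).1 = 1 → fpos (4 * p) (code v) = 8 * ((code v).2 / 4) + fu ((code v).2 % 4) := by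
    intro v hv
    simp [fpos, hv]
  have b2 : ∀ v, (code v).1 = 2 → fpos (4 * p) (code v) = 8 * ((code v).2 / 4) + fv ((code v).2 % 4) := by
    intro v hv
    simp [fpos, hv]
  have bu : ∀ i < 4, (i = 0 ∧ fu i = 7) ∨ (i = 1 ∧ fu i = 1) ∨ (i = 2 ∧ fu i = 3) ∨ (i = 3 ∧ fu i = 5) := by
    decide
  have bv : ∀ i < 4, (i = 0 ∧ fv i = 6) ∨ (i = 1 ∧ fv i = 2) ∨ (i = 2 ∧ fv i = 8) ∨ (i = 3 ∧ fv i = 4) := by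
    decide
  have bb : ∀ v, (code v).1 ≠ 0 → 1 ≤ fpos (4 * p) (code v) ∧ fpos (4 * p) (code v) ≤ 8 * p := by
    intro v hv
    have h3 := h3 v
    have hn := hn v hv
    have hm := Nat.mod_lt (code v).2 (show 4 > 0 by norm_num)
    have hu := bu _ hm
    have hv' := bv _ hm
    have h : (code v).1 = 1 ∨ (code v).1 = 2 := by omega
    rcases h with h | h
    · rw [b1 v h]; omega
    · rw [b2 v h]; omega
  refine book_planar G (fun v => fpos (4 * p) (code v)) ?_
    (fun v w => fpos (4 * p) (code v) ≠ 8 * p + 1 ∧ fpos (4 * p) (code w) ≠ 8 * p + 1) ?_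
  · intro v w h
    beta_reduce at h
    apply hcode
    have hmv := Nat.mod_lt (code v).2 (show 4 > 0 by norm_num)
    have hmw := Nat.mod_lt (code w).2 (show 4 > 0 by norm_num)
    have u1 := bu _ hmv
    have u2 := bv _ hmv
    have u3 := bu _ hmw
    have u4 := bv _ hmw
    have c1 := h3 v
    have c2 := h3 w
    have d1 := bb v
    have d2 := bb w
    have cv : (code v).1 = 0 ∨ (code v).1 = 1 ∨ (code v).1 = 2 := by omega
    have cw : (code w).1 = 0 ∨ (code w).1 = 1 ∨ (code w).1 = 2 := by omega
    rcases cv with cv | cv | cv <;> rcases cw with cw | cw | cw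
    · have := b0 v cv
      have := b0 w cw
      exact Prod.ext (by omega) (by omega)
    · have := b0 v cv
      omega
    · have := b0 v cv
      omega
    · have := b0 w cw
      omega
    · rw [b1 v cv, b1 w cw] at h
      exact Prod.ext (by omega) (by omega)
    · rw [b1 v cv, b2 w cw] at h
      omega
    · have := b0 w cw
      omega
    · rw [b2 v cv, b1 w cw] at h
      omega
    · rw [b2 v cv, b2 w cw] at h
      exact Prod.ext (by omega) (by omega)
  · intro a b c d hab hcd h1 h2 h4 hup
    have ea := hG _ _ hab
    have ec := hG _ _ hcd
    have a0 := b0 a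
    have bb0 := b0 b
    have c0 := b0 c
    have d0 := b0 d
    have a1 := bb a
    have bb1 := bb b
    have c1 := bb c
    have d1 := bb d
    clear b0 b1 b2 bu bv bb hG
    by_cases za : (code a).1 = 0 <;> by_cases zb : (code b).1 = 0 <;>
      by_cases zc : (code c).1 = 0 <;> by_cases zd : (code d).1 = 0 <;>
      simp only [za, zb, zc, zd, true_implies, ne_eq, not_true_eq_false, not_false_eq_true, false_implies, false_or, true_or, or_true, and_true] at * <;> omega

abbrev TV (m n : ℕ) := Σ i : Fin 3, (![Fin m, Fin n, Fin n] : Fin 3 → Type) i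

def vcode (m n : ℕ) : TV m n → ℕ × ℕ
  | ⟨⟨0, _⟩, a⟩ => (0, Fin.val (n := m) a)
  | ⟨⟨1, _⟩, a⟩ => (1, Fin.val (n := n) a)
  | ⟨⟨2, _⟩, a⟩ => (2, Fin.val (n := n) a)

lemma vcode_fst (m n : ℕ) (v : TV m n) : (vcode m n v).1 = v.1.val := by
  match v with
  | ⟨⟨0, _⟩, a⟩ => rfl
  | ⟨⟨1, _⟩, a⟩ => rfl
  | ⟨⟨2, _⟩, a⟩ => rfl

lemma vcode_inj (m n : ℕ) : Function.Injective (vcode m n) := by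
  intro v w h
  have h1 : v.1 = w.1 := Fin.ext (by rw [← vcode_fst, ← vcode_fst, h])
  obtain ⟨i, v⟩ := v
  obtain ⟨j, w⟩ := w
  simp only at h1
  subst h1
  match i, v, w, h with
  | ⟨0, _⟩, v, w, h => 
    have : v = w := Fin.ext (n := m) (congrArg Prod.snd h)
    rw [this]
  | ⟨1, _⟩, v, w, h => 
    have : v = w := Fin.ext (n := n) (congrArg Prod.snd h)
    rw [this]
  | ⟨2, _⟩, v, w, h => 
    have : v = w := Fin.ext (n := n) (congrArg Prod.snd h)
    rw [this]

lemma vcode_lt0 (m n : ℕ) (v : TV m n) (h : (vcode m n v).1 = 0) : (vcode m n v).2 < m := by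
  match v, h with
  | ⟨⟨0, _⟩, a⟩, _ => exact Fin.isLt (n := m) a
  | ⟨⟨1, _⟩, a⟩, h => exact absurd h one_ne_zero
  | ⟨⟨2, _⟩, a⟩, h => exact absurd h two_ne_zero

lemma vcode_lt1 (m n : ℕ) (v : TV m n) (h : (vcode m n v).1 ≠ 0) : (vcode m n v).2 < n := by
  match v, h with
  | ⟨⟨0, _⟩, a⟩, h => exact absurd rfl h
  | ⟨⟨1, _⟩, a⟩, h => exact Fin.isLt (n := n) a
  | ⟨⟨2, _⟩, a⟩, h => exact Fin.isLt (n := n) a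

lemma mp_adj (m n : ℕ) (v w : TV m n) :
    (completeMultipartiteGraph (![Fin m, Fin n, Fin n] : Fin 3 → Type)).Adj v w ↔
      (vcode m n v).1 ≠ (vcode m n w).1 := by
  rw [vcode_fst, vcode_fst, ← Fin.ext_iff.ne]
  rfl

lemma cov_same : ∀ i < 4, ∀ k < 4, (su true i, sv true k) ∈ upL ++ dnL ∨
    (sv true k, su true i) ∈ upL ++ dnL ∨ fu i = fv k + 1 ∨ fv k = fu i + 1 := by decide

lemma cov_diff : ∀ i < 4, ∀ k < 4,
    ((su true i, sv false k) ∈ upL ++ dnL ∨ (sv false k, su true i) ∈ upL ++ dnL) ∨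
    ((su false i, sv true k) ∈ upL ++ dnL ∨ (sv true k, su false i) ∈ upL ++ dnL) := by
  intro i hi k hk
  interval_cases i <;> interval_cases k <;> decide

def slotRel (r : ℕ) (c d : ℕ × ℕ) : Prop :=
  (slot r c, slot r d) ∈ upL ++ dnL ∨ (slot r d, slot r c) ∈ upL ++ dnL

def lastRel (n : ℕ) (c d : ℕ × ℕ) : Prop :=
  c.1 = 0 ∨ d.1 = 0 ∨ fpos n c = fpos n d + 1 ∨ fpos n d = fpos n c + 1

lemma slotRel_symm (r : ℕ) (c d : ℕ × ℕ) (h : slotRel r c d) : slotRel r d c := Or.symm h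
lemma lastRel_symm (r : ℕ) (c d : ℕ × ℕ) (h : lastRel r c d) : lastRel r d c := by
  unfold lastRel at *
  tauto

lemma cov_main (p : ℕ) (j k : ℕ) (hj : j < 4 * p) (hk : k < 4 * p) :
    (∃ r < p, slotRel r (1, j) (2, k)) ∨ lastRel (4 * p) (1, j) (2, k) := by
  have l1 := Nat.mod_lt j (show 4 > 0 by norm_num)
  have l2 := Nat.mod_lt k (show 4 > 0 by norm_num)
  have s1 : ∀ r, slot r (1, j) = su (decide (j / 4 = r)) (j % 4) := fun r => rfl
  have s2 : ∀ r, slot r (2, k) = sv (decide (k / 4 = r)) (k % 4) := fun r => rfl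
  have f1 : fpos (4 * p) (1, j) = 8 * (j / 4) + fu (j % 4) := rfl
  have f2 : fpos (4 * p) (2, k) = 8 * (k / 4) + fv (k % 4) := rfl
  by_cases h : j / 4 = k / 4
  · have := cov_same _ l1 _ l2
    rcases this with h1 | h1 | h1 | h1
    · exact Or.inl ⟨j / 4, by omega, Or.inl (by rw [s1, s2]; simpa [h] using h1)⟩
    · exact Or.inl ⟨j / 4, by omega, Or.inr (by rw [s1, s2]; simpa [h] using h1)⟩
    · exact Or.inr (Or.inr (Or.inr (Or.inl (by rw [f1, f2]; omega))))
    · exact Or.inr (Or.inr (Or.inr (Or.inr (by rw [f1, f2]; omega))))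
  · have h' : ¬ k / 4 = j / 4 := fun e => h e.symm
    left
    rcases cov_diff _ l1 _ l2 with h1 | h1
    · refine ⟨j / 4, by omega, ?_⟩
      unfold slotRel
      rw [s1, s2]
      simpa [h'] using h1
    · refine ⟨k / 4, by omega, ?_⟩
      unfold slotRel
      rw [s1, s2]
      simpa [h] using h1

lemma cov_sym (p : ℕ) (c d : ℕ × ℕ) (hc3 : c.1 < 3) (hd3 : d.1 < 3) (hne : c.1 ≠ d.1)
    (hc : c.1 ≠ 0 → c.2 < 4 * p) (hd : d.1 ≠ 0 → d.2 < 4 * p) :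
    (∃ r < p, slotRel r c d) ∨ lastRel (4 * p) c d := by
  by_cases c0 : c.1 = 0
  · exact Or.inr (Or.inl c0)
  by_cases d0 : d.1 = 0
  · exact Or.inr (Or.inr (Or.inl d0))
  have h : (c.1 = 1 ∧ d.1 = 2) ∨ (c.1 = 2 ∧ d.1 = 1) := by omega
  replace hc := hc c0
  replace hd := hd d0
  obtain ⟨c1, c2⟩ := c
  obtain ⟨d1, d2⟩ := d
  simp only at *
  rcases h with ⟨rfl, rfl⟩ | ⟨rfl, rfl⟩
  · exact cov_main p c2 d2 hc hd
  · rcases cov_main p d2 c2 hd hc with ⟨r, hr, h⟩ | h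
    · exact Or.inl ⟨r, hr, slotRel_symm _ _ _ h⟩
    · exact Or.inr (lastRel_symm _ _ _ h)

def pgr (m p : ℕ) (i : Fin (p + 1)) : SimpleGraph (TV m (4 * p)) where
  Adj v w := (vcode m (4 * p) v).1 ≠ (vcode m (4 * p) w).1 ∧
    ((i.val < p ∧ slotRel i.val (vcode m (4 * p) v) (vcode m (4 * p) w)) ∨
      (i.val = p ∧ lastRel (4 * p) (vcode m (4 * p) v) (vcode m (4 * p) w)))
  symm := ⟨fun v w h => ⟨h.1.symm, h.2.imp (fun h => ⟨h.1, slotRel_symm _ _ _ h.2⟩)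
    (fun h => ⟨h.1, lastRel_symm _ _ _ h.2⟩)⟩⟩
  loopless := ⟨fun v h => h.1 rfl⟩

lemma thick_upper (m p : ℕ) (hm : m ≤ 2) (hp : 1 ≤ p) :
    ∃ H : Fin (p + 1) → SimpleGraph (TV m (4 * p)),
      (∀ i, H i ≤ completeMultipartiteGraph (![Fin m, Fin (4 * p), Fin (4 * p)] : Fin 3 → Type)) ∧
      (∀ i, IsPlanar (H i)) ∧
      (⨆ i, H i) = completeMultipartiteGraph (![Fin m, Fin (4 * p), Fin (4 * p)] : Fin 3 → Type) := by
  have h3 : ∀ v, (vcode m (4 * p) v).1 < 3 := fun v => by rw [vcode_fst]; exact v.1.isLt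
  have hle : ∀ i, pgr m p i ≤ completeMultipartiteGraph (![Fin m, Fin (4 * p), Fin (4 * p)] : Fin 3 → Type) := by
    intro i v w h
    rw [mp_adj]
    exact h.1
  refine ⟨pgr m p, hle, ?_, le_antisymm (iSup_le hle) ?_⟩
  · intro i
    by_cases hi : i.val < p
    · refine slot_planar _ (vcode m (4 * p)) (vcode_inj _ _) (4 * p) i.val h3 ?_ ?_
      · intro v
        by_cases h0 : (vcode m (4 * p) v).1 = 0
        · have := vcode_lt0 _ _ v h0
          omega
        · exact vcode_lt1 _ _ v h0
      · intro v w h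
        rcases h.2 with h | h
        · exact h.2
        · omega
    · refine last_planar _ (vcode m (4 * p)) (vcode_inj _ _) p h3 ?_ (vcode_lt1 _ _) ?_
      · intro v h0
        have := vcode_lt0 _ _ v h0
        omega
      · intro v w h
        refine ⟨h.1, ?_⟩
        rcases h.2 with h | h
        · omega
        · exact h.2
  · intro v w h
    rw [mp_adj] at h
    rw [SimpleGraph.iSup_adj]
    rcases cov_sym p _ _ (h3 v) (h3 w) h (vcode_lt1 _ _ v) (vcode_lt1 _ _ w) with ⟨r, hr, h'⟩ | h'
    · exact ⟨⟨r, by omega⟩, h, Or.inl ⟨hr, h'⟩⟩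
    · exact ⟨⟨p, by omega⟩, h, Or.inr ⟨rfl, h'⟩⟩

lemma thick_lower (m p t : ℕ) (hp : 1 ≤ p) (H : Fin t → SimpleGraph (TV m (4 * p)))
    (hH : ∀ i, IsPlanar (H i))
    (hs : (⨆ i, H i) = completeMultipartiteGraph (![Fin m, Fin (4 * p), Fin (4 * p)] : Fin 3 → Type)) :
    p + 1 ≤ t := by
  classical
  have : Nonempty (Fin (4 * p)) := ⟨⟨0, by omega⟩⟩
  let α : Fin (4 * p) → TV m (4 * p) := fun a => ⟨1, a⟩
  let β : Fin (4 * p) → TV m (4 * p) := fun a => ⟨2, a⟩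
  have hα : Function.Injective α := fun a b h => Fin.ext (congrArg (fun v => (vcode m (4 * p) v).2) h)
  have hβ : Function.Injective β := fun a b h => Fin.ext (congrArg (fun v => (vcode m (4 * p) v).2) h)
  have hαβ : ∀ a b, α a ≠ β b := by
    intro a b h
    have := congrArg (fun v => (vcode m (4 * p) v).1) h
    exact absurd this (by decide : (1 : ℕ) ≠ 2)
  let E : Fin t → Finset (Fin (4 * p) × Fin (4 * p)) := fun i =>
    Finset.univ.filter (fun e => (H i).Adj (α e.1) (β e.2))
  have hE : ∀ i, (E i).card + 2 ≤ 2 * (4 * p + 4 * p) := by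
    intro i
    have := planar_bip_bound (H i) (hH i) α β hα hβ hαβ (E i) (fun e he => (Finset.mem_filter.mp he).2)
    simpa using this
  have hcov : (Finset.univ : Finset (Fin (4 * p) × Fin (4 * p))) ⊆ Finset.univ.biUnion E := by
    intro e _
    have : (⨆ i, H i).Adj (α e.1) (β e.2) := by
      rw [hs, mp_adj]
      exact (by decide : (1 : ℕ) ≠ 2)
    rw [SimpleGraph.iSup_adj] at this
    obtain ⟨i, hi⟩ := this
    exact Finset.mem_biUnion.mpr ⟨i, Finset.mem_univ _, Finset.mem_filter.mpr ⟨Finset.mem_univ _, hi⟩⟩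
  have h1 := (Finset.card_le_card hcov).trans Finset.card_biUnion_le
  have h2 : ∑ i, (E i).card ≤ ∑ i : Fin t, (16 * p - 2) :=
    Finset.sum_le_sum fun i _ => by have := hE i; omega
  simp only [Finset.card_univ, Fintype.card_prod, Fintype.card_fin, Finset.sum_const, smul_eq_mul] at h1 h2
  have h4 := h1.trans h2
  obtain ⟨q, hq⟩ : ∃ q, 16 * p - 2 = q := ⟨_, rfl⟩
  rw [hq] at h4
  by_contra hlt
  have h5 : t ≤ p := by omega
  have h6 : t * q ≤ p * q := Nat.mul_le_mul_right _ h5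
  have h7 : q + 2 = 16 * p := by omega
  nlinarith

lemma thick_eq (m n : ℕ) (hm : m ≤ 2) (hn : 1 ≤ n) (h : n % 4 = 0) :
    thickness (completeMultipartiteGraph (![Fin m, Fin n, Fin n] : Fin 3 → Type)) = n / 4 + 1 := by
  obtain ⟨p, rfl⟩ : ∃ p, n = 4 * p := ⟨n / 4, by omega⟩
  have hp : 1 ≤ p := by omega
  have e : 4 * p / 4 = p := by omega
  rw [e]
  unfold thickness
  apply le_antisymm
  · exact Nat.sInf_le (thick_upper m p hm hp)
  · refine le_csInf ⟨_, thick_upper m p hm hp⟩ ?_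
    rintro t ⟨H, -, hH, hs⟩
    exact thick_lower m p t hp H hH hs

theorem thickness_K1nn_eq_K2nn_of_four_dvd (n : ℕ) (hn : 1 ≤ n) (h : n % 4 = 0) :
    thickness (completeMultipartiteGraph ![Fin 1, Fin n, Fin n]) =
      thickness (completeMultipartiteGraph ![Fin 2, Fin n, Fin n]) ∧
    thickness (completeMultipartiteGraph ![Fin 1, Fin n, Fin n]) = n / 4 + 1 := by
  have h1 := thick_eq 1 n (by norm_num) hn h
  have h2 := thick_eq 2 n (by norm_num) hn h
  exact ⟨h1.trans h2.symm, h1⟩
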